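/- Let K be an infinite field, S = K[x_1,...,x_n], and fix an integer j. Let w ∈ Z_{≥0}^n, let M be a finitely generated graded S-module and J ⊆ S a homogeneous ideal. Then for a general λ ∈ K one has dim_K Tor_i^S(M, S/in_w(J))_j ≥ dim_K Tor_i^S(M, S/D_{λ,w}(J))_j for all i ≥ 0. -/

import Mathlib

open MvPolynomial TensorProduct CategoryTheory

noncomputable section

/-- The polynomial ring `S = K[x_1,...,x_n]`, standard graded. -/
abbrev PS (K : Type) [Field K] (n : ℕ) : Type := MvPolynomial (Fin n) K

variable (K : Type) [Field K] (n : ℕ)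

/-- An ideal of `S` is homogeneous if it contains all homogeneous components of its
elements. -/
def IsHomog (I : Ideal (PS K n)) : Prop :=
  ∀ f ∈ I, ∀ d : ℕ, MvPolynomial.homogeneousComponent d f ∈ I

/-- The change of coordinates of `S` induced by `g ∈ GL_n(K)`, determined by
`g(x_i) = ∑_j g_{ji} x_j`. -/
def coordChange (g : GL (Fin n) K) : PS K n →ₐ[K] PS K n :=
  MvPolynomial.aeval (fun i => ∑ j, ((g : Matrix (Fin n) (Fin n) K) j i) • MvPolynomial.X j)

/-- A property `P` holds for a general change of coordinates `g ∈ GL_n(K)` if there is a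
nonempty Zariski open subset `U ⊆ GL_n(K)` on which it holds; equivalently (as `GL_n(K)` is
an irreducible variety over the infinite field `K`) there is a nonzero polynomial `F` in the
matrix entries such that `P g` holds whenever `F` does not vanish at `g`. -/
def generally (P : GL (Fin n) K → Prop) : Prop :=
  ∃ F : MvPolynomial (Fin n × Fin n) K, F ≠ 0 ∧
    ∀ g : GL (Fin n) K,
      MvPolynomial.eval (fun p => (g : Matrix (Fin n) (Fin n) K) p.1 p.2) F ≠ 0 → P g

/-- The standard grading of `S = K[x_1,...,x_n]`, extended to `ℤ` (zero in negative
degrees). -/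
def polyGrade (d : ℤ) : Submodule K (PS K n) :=
  if 0 ≤ d then homogeneousSubmodule (Fin n) K d.toNat else ⊥

/-- The degree `d` component of the (internal) tensor-product grading on `A ⊗[K] B`. -/
def tensorGrade {A B : Type} [AddCommGroup A] [Module K A] [AddCommGroup B] [Module K B]
    (GA : ℤ → Submodule K A) (GB : ℤ → Submodule K B) (d : ℤ) :
    Submodule K (A ⊗[K] B) :=
  ⨆ p : ℤ, LinearMap.range (TensorProduct.map (GA p).subtype (GB (d - p)).subtype)

variable (N : Type) [AddCommGroup N] [Module K N] [Module (PS K n) N]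
  [IsScalarTower K (PS K n) N]

/-- The tower of `K`-vector spaces `D_i = S^{⊗ i} ⊗_K N` appearing in the bar complex
`M ⊗_K S^{⊗ i} ⊗_K N`, which computes `Tor^S_i(M, N)`. -/
def barD : ℕ → ModuleCat K
  | 0 => ModuleCat.of K N
  | (i + 1) => ModuleCat.of K (PS K n ⊗[K] (barD i))

/-- The internal `ℤ`-grading on `D_i = S^{⊗ i} ⊗_K N` induced by the standard grading of
`S` and a grading `GN` of `N`. -/
def barDGrade (GN : ℤ → Submodule K N) : (i : ℕ) → ℤ → Submodule K (barD K n N i)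
  | 0 => GN
  | (i + 1) => tensorGrade K (polyGrade K n) (barDGrade GN i)

/-- Scalar multiplication `S → N → N` as a `K`-bilinear map. -/
def smulBilin : PS K n →ₗ[K] N →ₗ[K] N :=
  LinearMap.mk₂ K (fun s x => s • x)
    (fun s₁ s₂ x => add_smul s₁ s₂ x)
    (fun c s x => smul_assoc c s x)
    (fun s x y => smul_add s x y)
    (fun c s x => (smul_comm c s x).symm)

/-- The "contraction" part of the bar differential, `c_i : D_{i+1} → D_i`, defined
recursively by `c_0(s ⊗ x) = s • x` and
`c_{i+1}(s ⊗ s' ⊗ t) = (s s') ⊗ t - s ⊗ c_i(s' ⊗ t)`. -/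
def barC : (i : ℕ) → ((barD K n N (i + 1)) →ₗ[K] (barD K n N i))
  | 0 => TensorProduct.lift (smulBilin K n N)
  | (i + 1) =>
      (TensorProduct.map (LinearMap.mul' K (PS K n)) LinearMap.id).comp
        (TensorProduct.assoc K (PS K n) (PS K n) (barD K n N i)).symm.toLinearMap
      - TensorProduct.map LinearMap.id (barC i)

variable (M : Type) [AddCommGroup M] [Module K M] [Module (PS K n) M]
  [IsScalarTower K (PS K n) M]

/-- Right scalar multiplication `M ⊗[K] S → M` as a `K`-linear map. -/
def smulMapM : M ⊗[K] PS K n →ₗ[K] M :=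
  TensorProduct.lift (LinearMap.mk₂ K (fun m s => s • m)
    (fun m₁ m₂ s => smul_add s m₁ m₂)
    (fun c m s => smul_comm s c m)
    (fun m s₁ s₂ => add_smul s₁ s₂ m)
    (fun c m s => smul_assoc c s m))

/-- The bar differential `b_i : M ⊗ D_{i+1} → M ⊗ D_i`,
`b(m ⊗ s ⊗ t) = (s • m) ⊗ t - m ⊗ c_i(s ⊗ t)`.  The complex
`⋯ → M ⊗_K S^{⊗ i} ⊗_K N → ⋯ → M ⊗_K S ⊗_K N → M ⊗_K N → 0`
is the bar complex `M ⊗_S Bar(S, N)`, whose `i`-th homology is `Tor^S_i(M, N)`;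
it is a complex of graded vector spaces with degree-preserving differentials. -/
def barB (i : ℕ) : (M ⊗[K] (barD K n N (i + 1))) →ₗ[K] (M ⊗[K] (barD K n N i)) :=
  (TensorProduct.map (smulMapM K n M) LinearMap.id).comp
      (TensorProduct.assoc K M (PS K n) (barD K n N i)).symm.toLinearMap
  - TensorProduct.map LinearMap.id (barC K n N i)

/-- `dim_K Tor_i^S(M, N)_j`, the dimension of the degree-`j` component of the graded module
`Tor_i^S(M, N)` for graded modules `M`, `N`: it is computed as the homology of the degree-`j`
strand of the bar complex, namely `dim (ker b_i)_j - dim (im b_{i+1})_j`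
(for `i = 0`, `dim (M ⊗_K N)_j - dim (im b_1)_j`). -/
def torStrandDim (GM : ℤ → Submodule K M) (GN : ℤ → Submodule K N) : ℕ → ℤ → ℕ
  | 0, j =>
      Module.finrank K ↥(tensorGrade K GM (barDGrade K n N GN 0) j) -
        Module.finrank K
          ↥(LinearMap.range (barB K n N M 0) ⊓ tensorGrade K GM (barDGrade K n N GN 0) j)
  | (i + 1), j =>
      Module.finrank K
          ↥(LinearMap.ker (barB K n N M i) ⊓
              tensorGrade K GM (barDGrade K n N GN (i + 1)) j) -
        Module.finrank K
          ↥(LinearMap.range (barB K n N M (i + 1)) ⊓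
              tensorGrade K GM (barDGrade K n N GN (i + 1)) j)

/-- The quotient grading on `S/J`. -/
def quotGrade (J : Ideal (PS K n)) : ℤ → Submodule K (PS K n ⧸ J) := fun d =>
  (polyGrade K n d).map (Ideal.Quotient.mkₐ K J).toLinearMap

/-- The grading on an ideal `I ⊆ S` viewed as an `S`-module. -/
def idealGrade (I : Ideal (PS K n)) : ℤ → Submodule K ↥I := fun d =>
  (polyGrade K n d).comap ((Submodule.subtype I).restrictScalars K)

/-- `dim_K Tor_i^S(S/I, S/J)_j`. -/
def torQQ (I J : Ideal (PS K n)) (i : ℕ) (j : ℤ) : ℕ :=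
  torStrandDim K n (PS K n ⧸ J) (PS K n ⧸ I) (quotGrade K n I) (quotGrade K n J) i j

/-- `dim_K Tor_i^S(I, S/J)_j`. -/
def torIQ (I J : Ideal (PS K n)) (i : ℕ) (j : ℤ) : ℕ :=
  torStrandDim K n (PS K n ⧸ J) ↥I (idealGrade K n I) (quotGrade K n J) i j

/-- A property `P` holds for a general (nonzero) scalar `λ ∈ K` if it holds on a nonempty
Zariski open subset of `K`; equivalently, outside the zero set of some nonzero polynomial.
(Since `{0}` is Zariski closed, it is equivalent to quantify over `λ ∈ Kˣ`.) -/
def generallyScalar (P : Kˣ → Prop) : Prop :=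
  ∃ F : Polynomial K, F ≠ 0 ∧ ∀ l : Kˣ, Polynomial.eval (l : K) F ≠ 0 → P l

/-- The diagonal change of coordinates `D_{λ,w} : x_i ↦ λ^{-w_i} x_i`. -/
def diagCoord (w : Fin n → ℕ) (l : Kˣ) : PS K n →ₐ[K] PS K n :=
  MvPolynomial.aeval (fun i => (((l⁻¹ : Kˣ) : K) ^ (w i)) • MvPolynomial.X i)

/-- The `w`-weight of an exponent vector: `∑ w_i m_i`. -/
def wdeg (w : Fin n → ℕ) (m : Fin n →₀ ℕ) : ℕ := ∑ i, w i * m i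

/-- The initial form `in_w(f)`: the sum of the terms of `f` of maximal `w`-weight. -/
def initialForm (w : Fin n → ℕ) (f : PS K n) : PS K n :=
  ∑ m ∈ f.support.filter (fun m => wdeg n w m = f.support.sup (wdeg n w)),
    MvPolynomial.monomial m (MvPolynomial.coeff m f)

/-- The initial ideal `in_w(I)` of `I` with respect to the weight order given by `w`. -/
def initialIdealW (w : Fin n → ℕ) (I : Ideal (PS K n)) : Ideal (PS K n) :=
  Ideal.span {g | ∃ f ∈ I, g = initialForm K n w f}


/-! ### Gradings -/

/-- An internal `ℤ`-grading, recorded through its coaction. -/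
structure IsGr {A : Type} [AddCommGroup A] [Module K A] (G : ℤ → Submodule K A) : Prop where
  top : ⨆ d, G d = ⊤
  ex : ∃ σ : A →ₗ[K] (ℤ →₀ A), ∀ p, ∀ a ∈ G p, σ a = Finsupp.single p a

section Gr

variable {K}
variable {A B : Type} [AddCommGroup A] [Module K A] [AddCommGroup B] [Module K B]
  {GA : ℤ → Submodule K A} {GB : ℤ → Submodule K B}

/-- The projection to the degree `d` component. -/
def IsGr.proj (h : IsGr K GA) (d : ℤ) : A →ₗ[K] A :=
  (Finsupp.lapply d).comp (Classical.choose h.ex)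

theorem IsGr.proj_of_mem (h : IsGr K GA) (d : ℤ) {p : ℤ} {a : A} (ha : a ∈ GA p) :
    h.proj d a = if p = d then a else 0 := by
  simp [IsGr.proj, Classical.choose_spec h.ex p a ha, Finsupp.single_apply]

theorem IsGr.ind (h : IsGr K GA) {P : A → Prop} (h1 : ∀ d, ∀ a ∈ GA d, P a) (h0 : P 0)
    (h2 : ∀ a b, P a → P b → P (a + b)) (a : A) : P a := by
  have ha : a ∈ ⨆ d, GA d := by rw [h.top]; trivial
  exact Submodule.iSup_induction GA (motive := P) ha h1 h0 h2

theorem IsGr.proj_mem (h : IsGr K GA) (d : ℤ) (a : A) : h.proj d a ∈ GA d := by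
  refine h.ind (P := fun a => h.proj d a ∈ GA d) ?_ ?_ ?_ a
  · intro p a ha
    rw [h.proj_of_mem d ha]
    split_ifs with hp
    · exact hp ▸ ha
    · exact zero_mem _
  · simp
  · intro a b ha hb
    rw [map_add]; exact add_mem ha hb

theorem IsGr.proj_self (h : IsGr K GA) (d : ℤ) {a : A} (ha : a ∈ GA d) : h.proj d a = a := by
  rw [h.proj_of_mem d ha, if_pos rfl]

theorem IsGr.proj_comm (hA : IsGr K GA) (hB : IsGr K GB) (f : A →ₗ[K] B)
    (hf : ∀ d, ∀ a ∈ GA d, f a ∈ GB d) (d : ℤ) (a : A) :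
    hB.proj d (f a) = f (hA.proj d a) := by
  refine hA.ind (P := fun a => hB.proj d (f a) = f (hA.proj d a)) ?_ ?_ ?_ a
  · intro p a ha
    rw [hA.proj_of_mem d ha, hB.proj_of_mem d (hf p a ha)]
    split_ifs <;> simp
  · simp
  · intro a b ha hb
    simp only [map_add, ha, hb]

theorem tensorGrade_eq_span (GA : ℤ → Submodule K A) (GB : ℤ → Submodule K B) (d : ℤ) :
    tensorGrade K GA GB d =
      Submodule.span K {x | ∃ p q, p + q = d ∧ ∃ a ∈ GA p, ∃ b ∈ GB q, x = a ⊗ₜ[K] b} := by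
  apply le_antisymm
  · refine iSup_le fun p => ?_
    rintro _ ⟨x, rfl⟩
    induction x with
    | zero => simp
    | tmul a b =>
      exact Submodule.subset_span ⟨p, d - p, by ring, a, a.2, b, b.2, by simp⟩
    | add x y hx hy => rw [map_add]; exact add_mem hx hy
  · refine Submodule.span_le.2 ?_
    rintro _ ⟨p, q, h, a, ha, b, hb, rfl⟩
    obtain rfl : q = d - p := by omega
    exact Submodule.mem_iSup_of_mem p ⟨⟨a, ha⟩ ⊗ₜ ⟨b, hb⟩, by simp⟩

theorem tmul_mem_tensorGrade {d p q : ℤ} (h : p + q = d) {a : A} (ha : a ∈ GA p) {b : B}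
    (hb : b ∈ GB q) : a ⊗ₜ[K] b ∈ tensorGrade K GA GB d := by
  rw [tensorGrade_eq_span]
  exact Submodule.subset_span ⟨p, q, h, a, ha, b, hb, rfl⟩

/-- To map a graded piece of a tensor product into a submodule it suffices to check
homogeneous pure tensors. -/
theorem tensorGrade_map_mem {C : Type} [AddCommGroup C] [Module K C] {d : ℤ}
    (f : A ⊗[K] B →ₗ[K] C) (W : Submodule K C)
    (h : ∀ p q, p + q = d → ∀ a ∈ GA p, ∀ b ∈ GB q, f (a ⊗ₜ b) ∈ W)
    {x : A ⊗[K] B} (hx : x ∈ tensorGrade K GA GB d) : f x ∈ W := by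
  rw [tensorGrade_eq_span] at hx
  have : Submodule.span K {x | ∃ p q, p + q = d ∧ ∃ a ∈ GA p, ∃ b ∈ GB q, x = a ⊗ₜ[K] b}
      ≤ W.comap f := by
    refine Submodule.span_le.2 ?_
    rintro _ ⟨p, q, hpq, a, ha, b, hb, rfl⟩
    exact h p q hpq a ha b hb
  exact this hx

theorem IsGr.tensor (hA : IsGr K GA) (hB : IsGr K GB) : IsGr K (tensorGrade K GA GB) where
  top := by
    rw [eq_top_iff]
    rintro x -
    induction x with
    | zero => simp
    | add x y hx hy => exact add_mem hx hy
    | tmul a b =>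
      refine hA.ind (P := fun a => a ⊗ₜ[K] b ∈ ⨆ d, tensorGrade K GA GB d) ?_ ?_ ?_ a
      · intro p a ha
        refine hB.ind (P := fun b => a ⊗ₜ[K] b ∈ ⨆ d, tensorGrade K GA GB d) ?_ ?_ ?_ b
        · intro q b hb
          exact Submodule.mem_iSup_of_mem (p + q) (tmul_mem_tensorGrade rfl ha hb)
        · simp
        · intro x y hx hy; rw [TensorProduct.tmul_add]; exact add_mem hx hy
      · simp
      · intro x y hx hy; rw [TensorProduct.add_tmul]; exact add_mem hx hy
  ex := by
    obtain ⟨s, hs⟩ := hA.ex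
    obtain ⟨t, ht⟩ := hB.ex
    refine ⟨(Finsupp.lmapDomain (A ⊗[K] B) K (fun x : ℤ × ℤ => x.1 + x.2)).comp
      ((finsuppTensorFinsupp K K A B ℤ ℤ).toLinearMap.comp (TensorProduct.map s t)), ?_⟩
    intro d x hx
    have := tensorGrade_map_mem (d := d) (GA := GA) (GB := GB)
      ((Finsupp.lmapDomain (A ⊗[K] B) K (fun x : ℤ × ℤ => x.1 + x.2)).comp
      ((finsuppTensorFinsupp K K A B ℤ ℤ).toLinearMap.comp (TensorProduct.map s t))
        - Finsupp.lsingle d) ⊥ ?_ hx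
    · rw [Submodule.mem_bot, LinearMap.sub_apply, sub_eq_zero] at this
      simpa using this
    · intro p q hpq a ha b hb
      simp [hs p a ha, ht q b hb, finsuppTensorFinsupp_single, hpq]

/-- Boundedness below together with degreewise finiteness. -/
structure IsBdd (G : ℤ → Submodule K A) (a : ℤ) : Prop where
  bot : ∀ d < a, G d = ⊥
  fin : ∀ d, (G d).FG

theorem IsBdd.tensor_bot {a b : ℤ} (hA : ∀ d < a, GA d = ⊥) (hB : ∀ d < b, GB d = ⊥) :
    ∀ d < a + b, tensorGrade K GA GB d = ⊥ := by
  intro d hd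
  rw [eq_bot_iff]
  intro x hx
  refine tensorGrade_map_mem (GA := GA) (GB := GB) (d := d) LinearMap.id ⊥ ?_ hx
  intro p q hpq u hu v hv
  by_cases hp : p < a
  · rw [hA p hp, Submodule.mem_bot] at hu
    simp [hu]
  · rw [hB q (by omega), Submodule.mem_bot] at hv
    simp [hv]

theorem IsBdd.tensor {a b : ℤ} (hA : IsBdd GA a) (hB : IsBdd GB b) :
    IsBdd (tensorGrade K GA GB) (a + b) where
  bot := IsBdd.tensor_bot hA.bot hB.bot
  fin := by
    intro d
    have : tensorGrade K GA GB d = ⨆ p ∈ Finset.Icc a (d - b),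
        LinearMap.range (TensorProduct.map (GA p).subtype (GB (d - p)).subtype) := by
      apply le_antisymm
      · refine iSup_le fun p => ?_
        by_cases hp : p ∈ Finset.Icc a (d - b)
        · exact le_iSup₂_of_le p hp le_rfl
        · rintro _ ⟨x, rfl⟩
          induction x with
          | zero => simp
          | add x y hx hy => rw [map_add]; exact add_mem hx hy
          | tmul u v =>
            rw [Finset.mem_Icc, not_and_or] at hp
            rcases hp with hp | hp
            · have hu : (u : A) = 0 := by
                have := (hA.bot p (by omega)).le u.2
                simpa using this
              simp [hu]
            · have hv : (v : B) = 0 := by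
                have := (hB.bot (d - p) (by omega)).le v.2
                simpa using this
              simp [hv]
      · exact iSup₂_le fun p _ => le_iSup (fun p => LinearMap.range
          (TensorProduct.map (GA p).subtype (GB (d - p)).subtype)) p
    rw [this]
    refine Submodule.fg_biSup _ _ fun p _ => ?_
    have h1 := Module.Finite.iff_fg.2 (hA.fin p)
    have h2 := Module.Finite.iff_fg.2 (hB.fin (d - p))
    exact Module.Finite.iff_fg.1 (Module.Finite.range _)

theorem isGr_of_decomposition (G : ℤ → Submodule K A) [DirectSum.Decomposition G] :
    IsGr K G where
  top := (DirectSum.Decomposition.isInternal G).submodule_iSup_eq_top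
  ex := by
    refine ⟨(DirectSum.toModule K ℤ (ℤ →₀ A)
      (fun d => (Finsupp.lsingle d).comp (G d).subtype)).comp
        (DirectSum.decomposeLinearEquiv G).toLinearMap, ?_⟩
    intro p a ha
    rw [LinearMap.comp_apply]
    have h1 : (DirectSum.decomposeLinearEquiv G).toLinearMap a =
        DirectSum.lof K ℤ (fun i => G i) p ⟨a, ha⟩ := DirectSum.decompose_of_mem G ha
    rw [h1, DirectSum.toModule_lof]
    simp

end Gr


section Gr2

variable {K}
variable {A B : Type} [AddCommGroup A] [Module K A] [AddCommGroup B] [Module K B]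
  {GA : ℤ → Submodule K A} {GB : ℤ → Submodule K B}

theorem IsGr.map (h : IsGr K GA) (f : A →ₗ[K] B) (hf : Function.Surjective f)
    (hk : ∀ a, f a = 0 → ∀ d, f (h.proj d a) = 0) : IsGr K (fun d => (GA d).map f) where
  top := by
    rw [← Submodule.map_iSup, h.top, Submodule.map_top, LinearMap.range_eq_top.2 hf]
  ex := by
    let s := Classical.choose h.ex
    have hs := Classical.choose_spec h.ex
    let g : A →ₗ[K] (ℤ →₀ B) := (Finsupp.mapRange.linearMap f).comp s
    have hg : LinearMap.ker f ≤ LinearMap.ker g := by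
      intro a ha
      rw [LinearMap.mem_ker] at ha ⊢
      ext d
      exact hk a ha d
    refine ⟨((LinearMap.ker f).liftQ g hg).comp
      (f.quotKerEquivOfSurjective hf).symm.toLinearMap, ?_⟩
    rintro p _ ⟨a, ha, rfl⟩
    have : (f.quotKerEquivOfSurjective hf).symm (f a) = (LinearMap.ker f).mkQ a := by
      rw [LinearEquiv.symm_apply_eq]; rfl
    simp only [LinearMap.comp_apply, LinearEquiv.coe_coe, this, Submodule.mkQ_apply,
      Submodule.liftQ_apply, g]
    have := hs p a ha
    change Finsupp.mapRange.linearMap f (s a) = _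
    rw [show s a = _ from this]
    simp

theorem IsBdd.map {a : ℤ} (h : IsBdd GA a) (f : A →ₗ[K] B) :
    IsBdd (fun d => (GA d).map f) a where
  bot := fun d hd => by simp [h.bot d hd]
  fin := fun d => (h.fin d).map f

end Gr2

theorem polyGrade_nat (d : ℕ) : polyGrade K n d = homogeneousSubmodule (Fin n) K d := by
  simp [polyGrade]

theorem mem_polyGrade {p : ℤ} {f : PS K n} (hf : f ∈ polyGrade K n p) :
    f = 0 ∨ ∃ d : ℕ, p = d ∧ f.IsHomogeneous d := by
  unfold polyGrade at hf
  split_ifs at hf with hp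
  · exact Or.inr ⟨p.toNat, by omega, hf⟩
  · exact Or.inl hf

theorem polyGrade_neg {p : ℤ} (hp : p < 0) : polyGrade K n p = ⊥ := by
  simp [polyGrade, not_le.2 hp]

theorem one_mem_polyGrade : (1 : PS K n) ∈ polyGrade K n 0 := by
  have := polyGrade_nat K n 0
  rw [Nat.cast_zero] at this
  rw [this]
  exact isHomogeneous_one _ _

theorem mul_mem_polyGrade {p q : ℤ} {f g : PS K n} (hf : f ∈ polyGrade K n p)
    (hg : g ∈ polyGrade K n q) : f * g ∈ polyGrade K n (p + q) := by
  rcases mem_polyGrade K n hf with rfl | ⟨d, rfl, hf⟩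
  · simp
  rcases mem_polyGrade K n hg with rfl | ⟨e, rfl, hg⟩
  · simp
  rw [← Nat.cast_add, polyGrade_nat]
  exact hf.mul hg

theorem isGr_poly : IsGr K (polyGrade K n) where
  top := by
    rw [eq_top_iff]
    rintro f -
    rw [← MvPolynomial.sum_homogeneousComponent f]
    refine Submodule.sum_mem _ fun d _ => Submodule.mem_iSup_of_mem (d : ℤ) ?_
    rw [polyGrade_nat]
    exact homogeneousComponent_isHomogeneous d f
  ex := by
    refine ⟨(basisMonomials (Fin n) K).constr K
      (fun m => Finsupp.single (m.degree : ℤ) (monomial m (1 : K))), ?_⟩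
    intro p f hf
    rcases mem_polyGrade K n hf with rfl | ⟨d, rfl, hf⟩
    · simp
    have key : ∀ m ∈ f.support, ((basisMonomials (Fin n) K).constr K
      (fun m => Finsupp.single (m.degree : ℤ) (monomial m (1 : K)))) (monomial m (coeff m f))
        = Finsupp.single (d : ℤ) (monomial m (coeff m f)) := by
      intro m hm
      have hd : m.degree = d := by
        by_contra hne
        exact (mem_support_iff.1 hm) (hf.coeff_eq_zero hne)
      have h1 : monomial m (coeff m f) = coeff m f • basisMonomials (Fin n) K m := by
        simp [smul_monomial]
      rw [h1, map_smul, Module.Basis.constr_basis, Finsupp.smul_single, hd]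
      simp
    conv_lhs => rw [f.as_sum]
    rw [map_sum, Finset.sum_congr rfl key]
    conv_rhs => rw [f.as_sum]
    exact (map_sum (Finsupp.singleAddHom (d : ℤ)) _ _).symm

theorem isGr_poly_proj (d : ℤ) (f : PS K n) :
    (isGr_poly K n).proj d f = if 0 ≤ d then homogeneousComponent d.toNat f else 0 := by
  refine (isGr_poly K n).ind (P := fun f => (isGr_poly K n).proj d f =
    if 0 ≤ d then homogeneousComponent d.toNat f else 0) ?_ ?_ ?_ f
  · intro p f hf
    rw [(isGr_poly K n).proj_of_mem d hf]
    rcases mem_polyGrade K n hf with rfl | ⟨e, rfl, hf⟩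
    · simp
    split_ifs with h1 h2 h2
    · subst h1
      rw [homogeneousComponent_of_mem hf, if_pos (by simp)]
    · omega
    · rw [homogeneousComponent_of_mem hf, if_neg (by omega)]
    · rfl
  · simp
  · intro a b ha hb
    rw [map_add, ha, hb]
    split_ifs <;> simp

theorem isBdd_poly : IsBdd (polyGrade K n) 0 where
  bot := fun d hd => polyGrade_neg K n hd
  fin := by
    intro d
    unfold polyGrade
    split_ifs
    · exact homogeneousSubmodule_fg _ _ _
    · exact Submodule.fg_bot

theorem isGr_quot (I : Ideal (PS K n)) (hI : IsHomog K n I) : IsGr K (quotGrade K n I) := by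
  refine (isGr_poly K n).map _ (Ideal.Quotient.mkₐ_surjective K I) ?_
  intro f hf d
  have hf' : f ∈ I := Ideal.Quotient.eq_zero_iff_mem.1 hf
  rw [isGr_poly_proj]
  split_ifs
  · exact Ideal.Quotient.eq_zero_iff_mem.2 (hI f hf' _)
  · simp

theorem isBdd_quot (I : Ideal (PS K n)) : IsBdd (quotGrade K n I) 0 :=
  (isBdd_poly K n).map _

/-- A finitely generated graded module is bounded below and degreewise finite dimensional. -/
theorem isBdd_module {GM : ℤ → Submodule K M} (h : IsGr K GM)
    (hG : ∀ (a : ℕ) (b : ℤ) (s : PS K n) (x : M),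
      s ∈ homogeneousSubmodule (Fin n) K a → x ∈ GM b → s • x ∈ GM ((a : ℤ) + b))
    (hfg : Module.Finite (PS K n) M) : ∃ a : ℤ, IsBdd GM a := by
  classical
  have h1 : ∀ x : M, ∃ T : Finset (ℤ × M), (∀ t ∈ T, t.2 ∈ GM t.1) ∧
      x ∈ Submodule.span (PS K n) (Prod.snd '' (T : Set (ℤ × M))) := by
    intro x
    refine h.ind (P := fun x => ∃ T : Finset (ℤ × M), (∀ t ∈ T, t.2 ∈ GM t.1) ∧
      x ∈ Submodule.span (PS K n) (Prod.snd '' (T : Set (ℤ × M)))) ?_ ?_ ?_ x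
    · intro d a ha
      exact ⟨{(d, a)}, by simpa using ha, Submodule.subset_span (by simp)⟩
    · exact ⟨∅, by simp, by simp⟩
    · rintro a b ⟨T, hT, ha⟩ ⟨U, hU, hb⟩
      refine ⟨T ∪ U, ?_, ?_⟩
      · intro t ht
        rcases Finset.mem_union.1 ht with ht | ht
        exacts [hT t ht, hU t ht]
      · refine add_mem (Submodule.span_mono ?_ ha) (Submodule.span_mono ?_ hb)
        · exact Set.image_mono (by simp)
        · exact Set.image_mono (by simp)
  obtain ⟨T0, hT0⟩ := hfg.fg_top
  choose U hU1 hU2 using h1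
  let T : Finset (ℤ × M) := T0.biUnion U
  have hT : ∀ t ∈ T, t.2 ∈ GM t.1 := by
    intro t ht
    obtain ⟨x, _, hx⟩ := Finset.mem_biUnion.1 ht
    exact hU1 x t hx
  have hspan : Submodule.span (PS K n) (Prod.snd '' (T : Set (ℤ × M))) = ⊤ := by
    rw [eq_top_iff, ← hT0, Submodule.span_le]
    intro x hx
    refine Submodule.span_mono (Set.image_mono ?_) (hU2 x)
    intro t ht
    exact Finset.mem_coe.2 (Finset.mem_biUnion.2 ⟨x, hx, ht⟩)
  let W : ℤ → Submodule K M := fun d => ⨆ t ∈ T,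
    (polyGrade K n (d - t.1)).map ((smulBilin K n M).flip t.2)
  have hW : ∀ x : M, ∀ d, h.proj d x ∈ W d := by
    intro x
    have hx : x ∈ Submodule.span (PS K n) (Prod.snd '' (T : Set (ℤ × M))) := by
      rw [hspan]; trivial
    induction hx using Submodule.closure_induction with
    | zero => intro d; simp
    | add x y _ _ hx hy => intro d; rw [map_add]; exact add_mem (hx d) (hy d)
    | smul_mem s x hx =>
      obtain ⟨⟨e, x⟩, ht, rfl⟩ := hx
      intro d
      refine (isGr_poly K n).ind (P := fun s => h.proj d (s • x) ∈ W d) ?_ ?_ ?_ s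
      · intro a s hs
        rcases mem_polyGrade K n hs with rfl | ⟨k, rfl, hk⟩
        · simp
        rw [h.proj_of_mem d (hG k e s x hk (hT _ ht))]
        split_ifs with hd
        · refine Submodule.mem_iSup_of_mem (e, x) (Submodule.mem_iSup_of_mem ht ⟨s, ?_, rfl⟩)
          change s ∈ polyGrade K n (d - e)
          rwa [show d - e = (k : ℤ) by omega]
        · exact zero_mem _
      · simp
      · intro a b ha hb
        rw [add_smul, map_add]; exact add_mem ha hb
  have hle : ∀ d, GM d ≤ W d := by
    intro d x hx
    have := hW x d
    rwa [h.proj_self d hx] at this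
  obtain ⟨a, ha⟩ : ∃ a : ℤ, ∀ t ∈ T, a ≤ t.1 := by
    obtain ⟨a, ha⟩ := (T.image Prod.fst).bddBelow
    exact ⟨a, fun t ht => ha (Finset.mem_coe.2 (Finset.mem_image_of_mem _ ht))⟩
  refine ⟨a, ⟨?_, ?_⟩⟩
  · intro d hd
    rw [eq_bot_iff]
    refine (hle d).trans (iSup₂_le fun t ht => ?_)
    rw [polyGrade_neg K n (by have := ha t ht; omega)]
    simp
  · intro d
    have hfin : (W d).FG := Submodule.fg_biSup _ _ fun t _ => ((isBdd_poly K n).fin _).map _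
    have := Module.Finite.iff_fg.2 hfin
    exact Submodule.FG.of_le hfin (hle d)


/-! ### The bar complex -/

section Bar

set_option linter.unusedSectionVars false

/-- `s ⊗ t` as an element of `D_{i+1}`. -/
def mkT (i : ℕ) : PS K n →ₗ[K] barD K n N i →ₗ[K] barD K n N (i + 1) :=
  TensorProduct.mk K (PS K n) (barD K n N i)

variable {N}

theorem barD_ind {i : ℕ} {P : barD K n N (i + 1) → Prop} (h0 : P 0)
    (h1 : ∀ s t, P (mkT K n N i s t)) (h2 : ∀ x y, P x → P y → P (x + y)) (x) : P x :=
  TensorProduct.induction_on (motive := P) x h0 h1 h2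

theorem barDGrade_map_mem {i : ℕ} {GN : ℤ → Submodule K N} {C : Type} [AddCommGroup C]
    [Module K C] {d : ℤ} (f : barD K n N (i + 1) →ₗ[K] C) (W : Submodule K C)
    (h : ∀ p q, p + q = d → ∀ s ∈ polyGrade K n p, ∀ t ∈ barDGrade K n N GN i q,
      f (mkT K n N i s t) ∈ W)
    {x : barD K n N (i + 1)} (hx : x ∈ barDGrade K n N GN (i + 1) d) : f x ∈ W :=
  tensorGrade_map_mem (GA := polyGrade K n) (GB := barDGrade K n N GN i) f W h hx

theorem mkT_mem {i : ℕ} {GN : ℤ → Submodule K N} {p q d : ℤ} (h : p + q = d) {s : PS K n}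
    (hs : s ∈ polyGrade K n p) {t : barD K n N i} (ht : t ∈ barDGrade K n N GN i q) :
    mkT K n N i s t ∈ barDGrade K n N GN (i + 1) d :=
  tmul_mem_tensorGrade h hs ht

theorem barC_zero_mkT (s : PS K n) (x : N) :
    barC K n N 0 (mkT K n N 0 s x) = (s • x : N) := rfl

theorem barC_succ_mkT (i : ℕ) (s s' : PS K n) (t : barD K n N i) :
    barC K n N (i + 1) (mkT K n N (i + 1) s (mkT K n N i s' t)) =
      mkT K n N i (s * s') t - mkT K n N i s (barC K n N i (mkT K n N i s' t)) := rfl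

theorem barB_mkT (i : ℕ) (m : M) (s : PS K n) (t : barD K n N i) :
    barB K n N M i (m ⊗ₜ mkT K n N i s t) =
      (s • m) ⊗ₜ t - m ⊗ₜ barC K n N i (mkT K n N i s t) := rfl

theorem barB_S (i : ℕ) (x : barD K n N (i + 2)) :
    barB K n N (PS K n) i x = barC K n N (i + 1) x := by
  refine barD_ind K n (P := fun x => barB K n N (PS K n) i x = barC K n N (i + 1) x) ?_ ?_ ?_ x
  · exact (map_zero (barB K n N (PS K n) i)).trans (map_zero (barC K n N (i + 1))).symm
  · intro s x
    refine barD_ind K n (P := fun x => barB K n N (PS K n) i (mkT K n N (i+1) s x) =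
      barC K n N (i + 1) (mkT K n N (i+1) s x)) ?_ ?_ ?_ x
    · rw [map_zero]
      exact (map_zero (barB K n N (PS K n) i)).trans (map_zero (barC K n N (i + 1))).symm
    · intro s' t
      refine (barB_mkT K n (PS K n) i s s' t).trans ?_
      rw [barC_succ_mkT, smul_eq_mul, mul_comm s' s]
      rfl
    · intro x y hx hy
      rw [map_add]
      refine (map_add (barB K n N (PS K n) i) _ _).trans ?_
      rw [map_add, ← hx, ← hy]
      rfl
  · intro x y hx hy
    refine (map_add (barB K n N (PS K n) i) _ _).trans ?_
    rw [map_add, ← hx, ← hy]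
    rfl

/-- The map `s ⊗ t ↦ ε(s) t`. -/
def epsD (i : ℕ) : barD K n N (i + 1) →ₗ[K] barD K n N i :=
  TensorProduct.lift ((LinearMap.lsmul K (barD K n N i)).comp
    (MvPolynomial.lcoeff K (0 : Fin n →₀ ℕ)))

theorem epsD_mkT (i : ℕ) (s : PS K n) (t : barD K n N i) :
    epsD K n i (mkT K n N i s t) = coeff 0 s • t := rfl

theorem barC_barC (i : ℕ) (x : barD K n N (i + 2)) :
    barC K n N i (barC K n N (i + 1) x) = 0 := by
  induction i with
  | zero =>
    refine barD_ind K n (P := fun x => barC K n N 0 (barC K n N 1 x) = 0) (by simp) ?_ ?_ x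
    · intro s x
      refine barD_ind K n (P := fun x => barC K n N 0 (barC K n N 1 (mkT K n N 1 s x)) = 0)
        (by simp) ?_ ?_ x
      · intro s' t
        rw [barC_succ_mkT, map_sub, sub_eq_zero]
        exact mul_smul (β := N) s s' t
      · intro x y hx hy
        rw [map_add, map_add, map_add, hx, hy, add_zero]
    · intro x y hx hy
      rw [map_add, map_add, hx, hy, add_zero]
  | succ i ih =>
    refine barD_ind K n (P := fun x => barC K n N (i + 1) (barC K n N (i + 2) x) = 0) (by simp) ?_ ?_ x
    · intro s x
      refine barD_ind K n (P := fun x =>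
        barC K n N (i + 1) (barC K n N (i + 2) (mkT K n N (i + 2) s x)) = 0)
        (by simp) ?_ ?_ x
      · intro s' x
        refine barD_ind K n (P := fun x =>
          barC K n N (i + 1) (barC K n N (i + 2) (mkT K n N (i + 2) s
            (mkT K n N (i + 1) s' x))) = 0) (by simp) ?_ ?_ x
        · intro r u
          have h := ih (mkT K n N (i + 1) s' (mkT K n N i r u))
          rw [barC_succ_mkT, map_sub, sub_eq_zero] at h
          have h2 : ∀ (v : barD K n N (i + 1)), barC K n N (i + 1) (mkT K n N (i + 1) s
              (mkT K n N i s' (barC K n N i v))) = mkT K n N i (s * s') (barC K n N i v)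
              - mkT K n N i s (barC K n N i (mkT K n N i s' (barC K n N i v))) :=
            fun v => barC_succ_mkT K n i s s' _
          rw [barC_succ_mkT, map_sub, barC_succ_mkT, barC_succ_mkT, map_sub, map_sub,
            barC_succ_mkT, h2, h, mul_assoc]
          abel
        · intro x y hx hy
          rw [map_add, map_add, map_add, map_add, hx, hy, add_zero]
      · intro x y hx hy
        rw [map_add, map_add, map_add, hx, hy, add_zero]
    · intro x y hx hy
      rw [map_add, map_add, hx, hy, add_zero]

theorem barB_barB (i : ℕ) (x : M ⊗[K] barD K n N (i + 2)) :
    barB K n N M i (barB K n N M (i + 1) x) = 0 := by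
  induction x with
  | zero => simp
  | add x y hx hy => rw [map_add, map_add, hx, hy, add_zero]
  | tmul m x =>
    refine barD_ind K n (P := fun x =>
      barB K n N M i (barB K n N M (i + 1) (m ⊗ₜ x)) = 0) (by simp) ?_ ?_ x
    · intro s x
      refine barD_ind K n (P := fun x =>
        barB K n N M i (barB K n N M (i + 1) (m ⊗ₜ (mkT K n N (i + 1) s x))) = 0)
          (by simp) ?_ ?_ x
      · intro s' t
        have h := barC_barC K n i (mkT K n N (i + 1) s (mkT K n N i s' t))
        rw [barC_succ_mkT, map_sub, sub_eq_zero] at h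
        rw [barB_mkT, map_sub, barB_mkT, barC_succ_mkT, TensorProduct.tmul_sub, map_sub,
          barB_mkT, barB_mkT, h, mul_comm s s', mul_smul]
        abel
      · intro x y hx hy
        rw [map_add, TensorProduct.tmul_add, map_add, map_add, hx, hy, add_zero]
    · intro x y hx hy
      rw [TensorProduct.tmul_add, map_add, map_add, hx, hy, add_zero]

/-- Differential of the bar complex with coefficients in `K`. -/
def barE (i : ℕ) : barD K n N (i + 1) →ₗ[K] barD K n N i := epsD K n i - barC K n N i

theorem barE_mkT (i : ℕ) (s : PS K n) (t : barD K n N i) :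
    barE K n i (mkT K n N i s t) = coeff 0 s • t - barC K n N i (mkT K n N i s t) := rfl

theorem epsD_barC (i : ℕ) (x : barD K n N (i + 2)) :
    epsD K n i (barC K n N (i + 1) x) + barC K n N i (epsD K n (i + 1) x) =
      epsD K n i (epsD K n (i + 1) x) := by
  refine barD_ind K n (P := fun x => epsD K n i (barC K n N (i + 1) x) + barC K n N i (epsD K n (i + 1) x) =
      epsD K n i (epsD K n (i + 1) x)) (by simp) ?_ ?_ x
  · intro s x
    refine barD_ind K n (P := fun x => epsD K n i (barC K n N (i + 1) (mkT K n N (i+1) s x)) +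
      barC K n N i (epsD K n (i + 1) (mkT K n N (i+1) s x)) =
      epsD K n i (epsD K n (i + 1) (mkT K n N (i+1) s x))) (by simp) ?_ ?_ x
    · intro s' t
      have h2 : coeff 0 (s * s') = coeff 0 s * coeff 0 s' := by
        simp only [← constantCoeff_eq, map_mul]
      rw [barC_succ_mkT, map_sub, epsD_mkT, epsD_mkT, epsD_mkT, map_smul, map_smul, epsD_mkT,
        h2, mul_smul]
      abel
    · intro x y hx hy
      simp only [map_add] at hx hy ⊢
      rw [← hx, ← hy]; abel
  · intro x y hx hy
    simp only [map_add] at hx hy ⊢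
    rw [← hx, ← hy]; abel

theorem barE_barE (i : ℕ) (x : barD K n N (i + 2)) :
    barE K n i (barE K n (i + 1) x) = 0 := by
  have := epsD_barC K n i x
  simp only [barE, LinearMap.sub_apply, map_sub, barC_barC]
  rw [← this]
  abel

theorem barC_h (i : ℕ) (x : barD K n N (i + 1)) :
    barC K n N (i + 1) (mkT K n N (i + 1) 1 x) = x - mkT K n N i 1 (barC K n N i x) := by
  refine barD_ind K n (P := fun x => barC K n N (i + 1) (mkT K n N (i + 1) 1 x) = x - mkT K n N i 1 (barC K n N i x)) (by simp) ?_ ?_ x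
  · intro s t
    rw [barC_succ_mkT, one_mul]
  · intro x y hx hy
    simp only [map_add, hx, hy]; abel

theorem barE_h (i : ℕ) (x : barD K n N (i + 1)) :
    barE K n (i + 1) (mkT K n N (i + 1) 1 x) = mkT K n N i 1 (barC K n N i x) := by
  rw [barE_mkT, barC_h]
  simp

variable (GN : ℤ → Submodule K N)

theorem barC_mem (hN : ∀ a b, ∀ s ∈ polyGrade K n a, ∀ x ∈ GN b, s • x ∈ GN (a + b))
    (i : ℕ) (d : ℤ) (x : barD K n N (i + 1))
    (hx : x ∈ barDGrade K n N GN (i + 1) d) : barC K n N i x ∈ barDGrade K n N GN i d := by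
  induction i generalizing d with
  | zero =>
    refine barDGrade_map_mem K n (GN := GN) (barC K n N 0) _ ?_ hx
    intro p q hpq s hs t ht
    subst hpq
    exact hN p q s hs t ht
  | succ i ih =>
    refine barDGrade_map_mem K n (GN := GN) (barC K n N (i + 1)) _ ?_ hx
    intro p q hpq s hs t ht
    refine barDGrade_map_mem K n (GN := GN) ((barC K n N (i + 1)).comp (mkT K n N (i + 1) s))
      _ ?_ ht
    intro q1 q2 hq s' hs' t ht
    rw [LinearMap.comp_apply, barC_succ_mkT]
    refine sub_mem (mkT_mem K n (p := p + q1) (q := q2) (by omega)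
      (mul_mem_polyGrade K n hs hs') ht) ?_
    exact mkT_mem K n hpq hs (ih q _ (mkT_mem K n hq hs' ht))

theorem coeff_zero_smul_mem {A : Type} [AddCommGroup A] [Module K A]
    {W : ℤ → Submodule K A} {p q d : ℤ} (h : p + q = d) {s : PS K n}
    (hs : s ∈ polyGrade K n p) {t : A} (ht : t ∈ W q) : coeff 0 s • t ∈ W d := by
  rcases mem_polyGrade K n hs with rfl | ⟨k, rfl, hk⟩
  · simp
  · by_cases hk0 : k = 0
    · subst hk0
      obtain rfl : q = d := by simpa using h
      exact Submodule.smul_mem _ _ ht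
    · rw [hk.coeff_eq_zero (by simpa using Ne.symm hk0), zero_smul]
      exact zero_mem _

theorem barE_mem (hN : ∀ a b, ∀ s ∈ polyGrade K n a, ∀ x ∈ GN b, s • x ∈ GN (a + b))
    (i : ℕ) (d : ℤ) (x : barD K n N (i + 1))
    (hx : x ∈ barDGrade K n N GN (i + 1) d) : barE K n i x ∈ barDGrade K n N GN i d := by
  refine sub_mem ?_ (barC_mem K n GN hN i d x hx)
  refine barDGrade_map_mem K n (GN := GN) (epsD K n i) _ ?_ hx
  intro p q hpq s hs t ht
  rw [epsD_mkT]
  exact coeff_zero_smul_mem K n hpq hs ht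

theorem barB_mem (hN : ∀ a b, ∀ s ∈ polyGrade K n a, ∀ x ∈ GN b, s • x ∈ GN (a + b))
    {GM : ℤ → Submodule K M}
    (hM : ∀ a b, ∀ s ∈ polyGrade K n a, ∀ x ∈ GM b, s • x ∈ GM (a + b)) (i : ℕ) (d : ℤ)
    (x : M ⊗[K] barD K n N (i + 1))
    (hx : x ∈ tensorGrade K GM (barDGrade K n N GN (i + 1)) d) :
    barB K n N M i x ∈ tensorGrade K GM (barDGrade K n N GN i) d := by
  refine tensorGrade_map_mem (barB K n N M i) _ ?_ hx
  intro p q hpq m hm t ht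
  refine barDGrade_map_mem K n (GN := GN) ((barB K n N M i).comp (TensorProduct.mk K _ _ m))
      _ ?_ ht
  intro q1 q2 hq s hs t ht
  change barB K n N M i (m ⊗ₜ mkT K n N i s t) ∈ _
  rw [barB_mkT]
  refine sub_mem (tmul_mem_tensorGrade (p := q1 + p) (q := q2) (by omega)
    (hM _ _ s hs m hm) ht) ?_
  exact tmul_mem_tensorGrade hpq hm (barC_mem K n GN hN i q _ (mkT_mem K n hq hs ht))

theorem barD_isGr (h : IsGr K GN) : ∀ i, IsGr K (barDGrade K n N GN i)
  | 0 => h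
  | (i + 1) => (isGr_poly K n).tensor (barD_isGr h i)

theorem barD_isBdd (h : IsBdd GN 0) : ∀ i, IsBdd (barDGrade K n N GN i) 0
  | 0 => h
  | (i + 1) => by
    have := (isBdd_poly K n).tensor (barD_isBdd h i)
    rwa [add_zero] at this

end Bar


/-! ### Vanishing of high Tor in a fixed degree -/

section Vanish

set_option linter.unusedSectionVars false

variable {N} {M}

/-- The part of the degree `j` strand of `M ⊗ D_i` where the `M`-degree is at least `p`. -/
def Fil (GM : ℤ → Submodule K M) (GN : ℤ → Submodule K N) (p j : ℤ) (i : ℕ) :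
    Submodule K (M ⊗[K] barD K n N i) :=
  Submodule.span K {z | ∃ q, p ≤ q ∧ ∃ m ∈ GM q, ∃ x ∈ barDGrade K n N GN i (j - q),
    z = m ⊗ₜ x}

theorem tmul_mem_Fil {GM : ℤ → Submodule K M} {GN : ℤ → Submodule K N} {p j q r : ℤ} {i : ℕ}
    (hq : p ≤ q) (hr : q + r = j) {m : M} (hm : m ∈ GM q) {x : barD K n N i}
    (hx : x ∈ barDGrade K n N GN i r) : m ⊗ₜ x ∈ Fil K n GM GN p j i := by
  obtain rfl : r = j - q := by omega
  exact Submodule.subset_span ⟨q, hq, m, hm, x, hx, rfl⟩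

theorem Fil_map_mem {GM : ℤ → Submodule K M} {GN : ℤ → Submodule K N} {p j : ℤ} {i : ℕ}
    {C : Type} [AddCommGroup C] [Module K C] (f : M ⊗[K] barD K n N i →ₗ[K] C)
    (W : Submodule K C)
    (h : ∀ q, p ≤ q → ∀ m ∈ GM q, ∀ x ∈ barDGrade K n N GN i (j - q), f (m ⊗ₜ x) ∈ W)
    {z} (hz : z ∈ Fil K n GM GN p j i) : f z ∈ W := by
  have : Fil K n GM GN p j i ≤ W.comap f := by
    refine Submodule.span_le.2 ?_
    rintro _ ⟨q, hq, m, hm, x, hx, rfl⟩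
    exact h q hq m hm x hx
  exact this hz

theorem Fil_mono {GM : ℤ → Submodule K M} {GN : ℤ → Submodule K N} {p p' j : ℤ} {i : ℕ}
    (h : p ≤ p') : Fil K n GM GN p' j i ≤ Fil K n GM GN p j i := by
  refine Submodule.span_mono ?_
  rintro _ ⟨q, hq, r⟩
  exact ⟨q, h.trans hq, r⟩

theorem Fil_bot {GM : ℤ → Submodule K M} {GN : ℤ → Submodule K N} (hb : IsBdd GN 0)
    {p j : ℤ} {i : ℕ} (h : j < p) {z} (hz : z ∈ Fil K n GM GN p j i) : z = 0 := by
  refine Fil_map_mem K n (LinearMap.id) ⊥ ?_ hz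
  intro q hq m hm x hx
  rw [(barD_isBdd K n GN hb i).bot _ (by omega), Submodule.mem_bot] at hx
  simp [hx]

/-- The statement that the strands of `M ⊗ D` are exact at `i+1` in a range of degrees. -/
def VanA (GN : ℤ → Submodule K N) (i : ℕ) : Prop :=
  ∀ (M : Type) [AddCommGroup M] [Module K M] [Module (PS K n) M] [IsScalarTower K (PS K n) M]
    (GM : ℤ → Submodule K M), IsGr K GM →
    (∀ a b, ∀ s ∈ polyGrade K n a, ∀ x ∈ GM b, s • x ∈ GM (a + b)) →
    ∀ p j : ℤ, j - p < i + 1 → ∀ z ∈ Fil K n GM GN p j (i + 1), barB K n N M i z = 0 →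
    ∃ u ∈ Fil K n GM GN p j (i + 2), barB K n N M (i + 1) u = z

/-- Exactness of the bar complex with coefficients in `K`. -/
def VanB (GN : ℤ → Submodule K N) (i : ℕ) : Prop :=
  ∀ e : ℤ, e < i + 1 → ∀ z ∈ barDGrade K n N GN (i + 1) e, barE K n i z = 0 →
    ∃ u ∈ barDGrade K n N GN (i + 2) e, barE K n (i + 1) u = z

variable (GN : ℤ → Submodule K N)

theorem Fil_S_le (e : ℤ) (i : ℕ) :
    Fil K n (polyGrade K n) GN 1 e i ≤ barDGrade K n N GN (i + 1) e := by
  intro z hz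
  refine Fil_map_mem K n (GM := polyGrade K n) (GN := GN) LinearMap.id
    (tensorGrade K (polyGrade K n) (barDGrade K n N GN i) e) ?_ hz
  intro q hq m hm x hx
  exact tmul_mem_tensorGrade (by omega) hm hx

theorem epsD_Fil (e : ℤ) (i : ℕ) (z : barD K n N (i + 1))
    (hz : z ∈ Fil K n (polyGrade K n) GN 1 e i) : epsD K n i z = 0 := by
  have := Fil_map_mem K n (GM := polyGrade K n) (GN := GN) (epsD K n i) ⊥ ?_ hz
  · exact this
  intro q hq m hm x hx
  change coeff 0 m • x = 0
  rcases mem_polyGrade K n hm with rfl | ⟨k, rfl, hk⟩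
  · simp
  · rw [hk.coeff_eq_zero (by simp; omega), zero_smul]

/-- An element of degree `a` of `S` is, up to positive degree elements, a constant. -/
theorem poly_cases {a : ℤ} {s : PS K n} (hs : s ∈ polyGrade K n a) :
    (a = 0 ∧ s = C (coeff 0 s)) ∨ (1 ≤ a ∧ coeff 0 s = 0) ∨ s = 0 := by
  rcases mem_polyGrade K n hs with rfl | ⟨k, rfl, hk⟩
  · simp
  · rcases Nat.eq_zero_or_pos k with rfl | hk0
    · left
      refine ⟨rfl, ?_⟩
      exact totalDegree_eq_zero_iff_eq_C.1 (by
        have := hk.totalDegree_le; omega)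
    · right; left
      exact ⟨by omega, hk.coeff_eq_zero (by simp; omega)⟩

/-- The positive part of `D_{i+1}`. -/
def FilS (e : ℤ) (i : ℕ) : Submodule K (barD K n N (i + 1)) :=
  Fil K n (polyGrade K n) GN 1 e i

theorem sub_h_mem (e : ℤ) (i : ℕ) (z : barD K n N (i + 1))
    (hz : z ∈ barDGrade K n N GN (i + 1) e) :
    z - mkT K n N i 1 (epsD K n i z) ∈ FilS K n GN e i := by
  refine barDGrade_map_mem K n (GN := GN) (C := barD K n N (i + 1))
    (LinearMap.id - (mkT K n N i 1).comp (epsD K n i)) (FilS K n GN e i) ?_ hz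
  intro p q hpq s hs t ht
  change mkT K n N i s t - mkT K n N i 1 (epsD K n i (mkT K n N i s t)) ∈ FilS K n GN e i
  rw [epsD_mkT]
  rcases poly_cases K n hs with ⟨rfl, h⟩ | ⟨h1, h2⟩ | rfl
  · have : mkT K n N i s t - mkT K n N i 1 (coeff 0 s • t) = 0 := by
      rw [map_smul, ← LinearMap.smul_apply, ← map_smul, sub_eq_zero]
      congr 2
      conv_lhs => rw [h]
      rw [smul_eq_C_mul, mul_one]
    rw [this]
    exact zero_mem (FilS K n GN e i)
  · rw [h2, zero_smul, map_zero, sub_zero]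
    exact tmul_mem_Fil K n h1 hpq hs ht
  · have : mkT K n N i 0 t - mkT K n N i 1 (coeff 0 (0 : PS K n) • t) = 0 := by simp
    rw [this]
    exact zero_mem (FilS K n GN e i)

theorem vanB_of (hb : IsBdd GN 0)
    (hN : ∀ a b, ∀ s ∈ polyGrade K n a, ∀ x ∈ GN b, s • x ∈ GN (a + b))
    (i : ℕ) (h : ∀ k, i = k + 1 → VanA K n GN k) : VanB K n GN i := by
  intro e he z hz hz0
  have hz1 : epsD K n i z = barC K n N i z := sub_eq_zero.1 hz0
  have hp := sub_h_mem K n GN e i z hz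
  set zp : barD K n N (i + 1) := z - mkT K n N i 1 (epsD K n i z) with hzp
  have hex : ∃ u : barD K n N (i + 2), u ∈ Fil K n (polyGrade K n) GN 1 e (i + 1) ∧
      barC K n N (i + 1) u = zp := by
    cases i with
    | zero =>
      refine ⟨0, zero_mem (Fil K n (polyGrade K n) GN 1 e 1), ?_⟩
      rw [map_zero]
      exact (Fil_bot K n hb (by push_cast at he; omega) hp).symm
    | succ k =>
      have hc : barC K n N (k + 1) zp = 0 := by
        rw [hzp, map_sub, barC_h, hz1, barC_barC, map_zero, sub_zero, sub_self]
      have hcB : barB K n N (PS K n) k zp = 0 := (barB_S K n k zp).trans hc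
      obtain ⟨u, hu, hu2⟩ := h k rfl (PS K n) (polyGrade K n) (isGr_poly K n)
        (fun a b s hs x hx => mul_mem_polyGrade K n hs hx) 1 e (by push_cast at he; omega)
        zp hp hcB
      exact ⟨u, hu, (barB_S K n (k + 1) u).symm.trans hu2⟩
  obtain ⟨u, hu, huz⟩ := hex
  refine ⟨mkT K n N (i + 1) 1 z - u, ?_, ?_⟩
  · exact sub_mem (mkT_mem K n (zero_add e) (one_mem_polyGrade K n) hz)
      (Fil_S_le K n GN e (i + 1) hu)
  · rw [map_sub, barE_h]
    have h1 : barE K n (i + 1) u = - zp := by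
      rw [barE, LinearMap.sub_apply, epsD_Fil K n GN e (i + 1) u hu, huz, zero_sub]
    rw [h1, hzp, hz1]
    abel

theorem vanA_of (hb : IsBdd GN 0)
    (hN : ∀ a b, ∀ s ∈ polyGrade K n a, ∀ x ∈ GN b, s • x ∈ GN (a + b))
    (i : ℕ) (hB : VanB K n GN i) : VanA K n GN i := by
  intro M _ _ _ _ GM hM hG
  suffices H : ∀ (k : ℕ) (p j : ℤ), j + 1 - p ≤ k → j - p < i + 1 →
      ∀ z ∈ Fil K n GM GN p j (i + 1), barB K n N M i z = 0 →
      ∃ u ∈ Fil K n GM GN p j (i + 2), barB K n N M (i + 1) u = z by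
    intro p j
    exact H (j + 1 - p).toNat p j (by omega)
  intro k
  induction k with
  | zero =>
    intro p j hk _ z hz _
    refine ⟨0, zero_mem _, ?_⟩
    rw [map_zero, Fil_bot K n hb (by push_cast at hk; omega) hz]
  | succ k ih =>
    intro p j hk hj z hz hz0
    let D := barD K n N
    let G := barDGrade K n N GN
    let P : ∀ l, M ⊗[K] D l →ₗ[K] M ⊗[K] D l := fun l => (hM.proj p).rTensor (D l)
    have h1 : P (i + 1) z ∈ LinearMap.range
        (TensorProduct.map (GM p).subtype (G (i + 1) (j - p)).subtype) := by
      refine Fil_map_mem K n (P (i + 1)) _ ?_ hz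
      intro q hq m hm x hx
      simp only [P, LinearMap.rTensor_tmul]
      rw [hM.proj_of_mem p hm]
      split_ifs with hqp
      · subst hqp
        exact ⟨⟨m, hm⟩ ⊗ₜ ⟨x, hx⟩, by simp⟩
      · simp
    have h2 : z - P (i + 1) z ∈ Fil K n GM GN (p + 1) j (i + 1) := by
      refine Fil_map_mem K n (LinearMap.id - P (i + 1)) _ ?_ hz
      intro q hq m hm x hx
      simp only [P, LinearMap.sub_apply, LinearMap.id_apply, LinearMap.rTensor_tmul]
      rw [hM.proj_of_mem p hm]
      split_ifs with hqp
      · simp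
      · simp only [TensorProduct.zero_tmul, sub_zero]
        exact tmul_mem_Fil K n (by omega) (by omega) hm hx
    have h3 : (barE K n i).lTensor M (P (i + 1) z) = 0 := by
      have key : (((barE K n i).lTensor M).comp (P (i + 1)) - (P i).comp (barB K n N M i)) z
          ∈ (⊥ : Submodule K (M ⊗[K] D i)) := by
        refine Fil_map_mem K n _ _ ?_ hz
        intro q hq m hm x _
        rw [Submodule.mem_bot, LinearMap.sub_apply, sub_eq_zero, LinearMap.comp_apply,
          LinearMap.comp_apply]
        refine barD_ind K n (P := fun x => (barE K n i).lTensor M (P (i + 1) (m ⊗ₜ x)) =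
          P i (barB K n N M i (m ⊗ₜ x))) (by simp) ?_ ?_ x
        · intro s t
          refine (isGr_poly K n).ind (P := fun s => (barE K n i).lTensor M
            (P (i + 1) (m ⊗ₜ mkT K n N i s t)) =
            P i (barB K n N M i (m ⊗ₜ mkT K n N i s t))) ?_ (by simp) ?_ s
          · intro a s hs
            simp only [P, LinearMap.rTensor_tmul, LinearMap.lTensor_tmul, barB_mkT, barE_mkT,
              map_sub, TensorProduct.tmul_sub]
            congr 1
            rcases poly_cases K n hs with ⟨rfl, h⟩ | ⟨h1, h2⟩ | rfl
            · have hsm : s • m = coeff 0 s • m := by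
                conv_lhs => rw [h]
                rw [← algebraMap_eq, algebraMap_smul]
              rw [hsm, map_smul, TensorProduct.smul_tmul]
            · rw [h2, hM.proj_of_mem p (hG a q s hs m hm), if_neg (by omega)]
              simp
            · simp
          · intro s s' hs hs'
            simp only [map_add, LinearMap.add_apply, TensorProduct.tmul_add] at hs hs' ⊢
            rw [hs, hs']
        · intro x y hx hy
          simp only [map_add, TensorProduct.tmul_add] at hx hy ⊢
          rw [hx, hy]
      rw [Submodule.mem_bot, LinearMap.sub_apply, sub_eq_zero, LinearMap.comp_apply,
          LinearMap.comp_apply, hz0, map_zero] at key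
      exact key
    have h4 : ∃ u ∈ LinearMap.range
        (TensorProduct.map (GM p).subtype (G (i + 2) (j - p)).subtype),
        (barE K n (i + 1)).lTensor M u = P (i + 1) z := by
      obtain ⟨y, hy⟩ := h1
      let f : G (i + 2) (j - p) →ₗ[K] G (i + 1) (j - p) :=
        (barE K n (i + 1)).restrict (fun x hx => barE_mem K n GN hN (i + 1) (j - p) x hx)
      let g : G (i + 1) (j - p) →ₗ[K] D i := (barE K n i).comp (G (i + 1) (j - p)).subtype
      have hfg : Function.Exact f g := by
        intro x
        constructor
        · intro hx
          obtain ⟨u, hu, hux⟩ := hB (j - p) (by omega) x x.2 hx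
          exact ⟨⟨u, hu⟩, Subtype.ext hux⟩
        · rintro ⟨u, rfl⟩
          exact barE_barE K n i u.1
      have hex := Module.Flat.lTensor_exact (GM p) hfg
      have hinj : Function.Injective ((GM p).subtype.rTensor (D i)) :=
        Module.Flat.rTensor_preserves_injective_linearMap _ (GM p).injective_subtype
      have hy0 : g.lTensor (GM p) y = 0 := by
        apply hinj
        rw [map_zero, ← h3, ← hy]
        simp only [g, LinearMap.lTensor, LinearMap.rTensor, ← LinearMap.comp_apply,
          ← TensorProduct.map_comp]
        rfl
      obtain ⟨u, hu⟩ := (hex y).1 hy0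
      refine ⟨_, ⟨u, rfl⟩, ?_⟩
      rw [← hy, ← hu]
      simp only [LinearMap.lTensor, ← LinearMap.comp_apply,
          ← TensorProduct.map_comp]
      rfl
    obtain ⟨u, hu, hu2⟩ := h4
    have hu3 : u ∈ Fil K n GM GN p j (i + 2) := by
      clear hu2
      obtain ⟨v, rfl⟩ := hu
      induction v with
      | zero => simp
      | add x y hx hy => rw [map_add]; exact add_mem hx hy
      | tmul m x => exact tmul_mem_Fil K n le_rfl (by ring) m.2 x.2
    have h5 : (barE K n (i + 1)).lTensor M u - barB K n N M (i + 1) u ∈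
        Fil K n GM GN (p + 1) j (i + 1) := by
      clear hu2 hu3
      obtain ⟨v, rfl⟩ := hu
      induction v with
      | zero => simp
      | add x y hx hy =>
        simp only [map_add] at hx hy ⊢
        rw [add_sub_add_comm]; exact add_mem hx hy
      | tmul m x =>
        refine barDGrade_map_mem K n (GN := GN) (((barE K n (i + 1)).lTensor M
          - barB K n N M (i + 1)).comp (TensorProduct.mk K M (D (i + 2)) m)) _ ?_ x.2
        intro a b hab s hs t ht
        change (m : M) ⊗ₜ[K] barE K n (i + 1) (mkT K n N (i + 1) s t) -
          barB K n N M (i + 1) ((m : M) ⊗ₜ[K] mkT K n N (i + 1) s t) ∈ _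
        rw [barB_mkT, barE_mkT, TensorProduct.tmul_sub, sub_sub_sub_cancel_right]
        rcases poly_cases K n hs with ⟨rfl, h⟩ | ⟨h1, h2⟩ | rfl
        · have hsm : s • (m : M) = coeff 0 s • (m : M) := by
            conv_lhs => rw [h]
            rw [← algebraMap_eq, algebraMap_smul]
          rw [hsm, TensorProduct.smul_tmul, sub_self]
          exact zero_mem _
        · rw [h2, zero_smul, TensorProduct.tmul_zero, zero_sub]
          refine neg_mem ?_
          exact tmul_mem_Fil K n (q := a + p) (r := b) (by omega) (by omega)
            (hG a p s hs m m.2) ht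
        · simp
    have h6 : z - barB K n N M (i + 1) u ∈ Fil K n GM GN (p + 1) j (i + 1) := by
      have := add_mem h2 h5
      rw [hu2] at this
      simpa using this
    obtain ⟨v, hv, hv2⟩ := ih (p + 1) j (by push_cast at hk; omega) (by omega) _ h6
      (by rw [map_sub, hz0, barB_barB, sub_zero])
    refine ⟨u + v, add_mem hu3 (Fil_mono K n (by omega) hv), ?_⟩
    rw [map_add, hv2]
    abel

theorem vanA (hb : IsBdd GN 0)
    (hN : ∀ a b, ∀ s ∈ polyGrade K n a, ∀ x ∈ GN b, s • x ∈ GN (a + b))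
    (i : ℕ) : VanA K n GN i := by
  induction i with
  | zero => exact vanA_of K n GN hb hN 0 (vanB_of K n GN hb hN 0 (fun k hk => by omega))
  | succ i ih =>
    refine vanA_of K n GN hb hN _ (vanB_of K n GN hb hN _ (fun k hk => ?_))
    obtain rfl : i = k := by omega
    exact ih

theorem tensorGrade_le_Fil {GM : ℤ → Submodule K M} {a : ℤ} (hM : ∀ d < a, GM d = ⊥)
    (j : ℤ) (i : ℕ) :
    tensorGrade K GM (barDGrade K n N GN i) j ≤ Fil K n GM GN a j i := by
  intro z hz
  refine tensorGrade_map_mem LinearMap.id _ ?_ hz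
  intro p q hpq m hm x hx
  by_cases hp : p < a
  · rw [hM p hp, Submodule.mem_bot] at hm
    simp [hm]
  · exact tmul_mem_Fil K n (by omega) hpq hm hx

theorem torStrandDim_zero (GM : ℤ → Submodule K M) (j : ℤ) :
    torStrandDim K n N M GM GN 0 j =
      Module.finrank K ↥(tensorGrade K GM (barDGrade K n N GN 0) j) -
        Module.finrank K
          ↥(LinearMap.range (barB K n N M 0) ⊓ tensorGrade K GM (barDGrade K n N GN 0) j) :=
  rfl

theorem torStrandDim_succ (GM : ℤ → Submodule K M) (i : ℕ) (j : ℤ) :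
    torStrandDim K n N M GM GN (i + 1) j =
      Module.finrank K
          ↥(LinearMap.ker (barB K n N M i) ⊓
              tensorGrade K GM (barDGrade K n N GN (i + 1)) j) -
        Module.finrank K
          ↥(LinearMap.range (barB K n N M (i + 1)) ⊓
              tensorGrade K GM (barDGrade K n N GN (i + 1)) j) :=
  rfl

/-- Vanishing of the strand dimension for large homological degree. -/
theorem torStrandDim_eq_zero (hb : IsBdd GN 0)
    (hN : ∀ a b, ∀ s ∈ polyGrade K n a, ∀ x ∈ GN b, s • x ∈ GN (a + b))
    {GM : ℤ → Submodule K M} {a : ℤ} (hgr : IsGr K GM)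
    (hM : IsBdd GM a)
    (hG : ∀ a b, ∀ s ∈ polyGrade K n a, ∀ x ∈ GM b, s • x ∈ GM (a + b))
    (i : ℕ) (j : ℤ) (hij : j - a < i) : torStrandDim K n N M GM GN i j = 0 := by
  have hfin := fun i => (hM.tensor (barD_isBdd K n GN hb i)).fin j
  cases i with
  | zero =>
    rw [torStrandDim_zero, (hM.tensor (barD_isBdd K n GN hb 0)).bot j (by push_cast at hij; omega)]
    simp
  | succ i =>
    rw [torStrandDim_succ, Nat.sub_eq_zero_iff_le]
    have := Module.Finite.iff_fg.2 (hfin (i + 1))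
    have : Module.Finite K ↥(LinearMap.range (barB K n N M (i + 1)) ⊓
              tensorGrade K GM (barDGrade K n N GN (i + 1)) j) :=
      Submodule.finiteDimensional_inf_right _ _
    refine Submodule.finrank_mono ?_
    rintro z ⟨hz1, hz2⟩
    obtain ⟨u, _, hu⟩ := vanA K n GN hb hN i M GM hgr hG a j (by push_cast at hij; omega) z
      (tensorGrade_le_Fil K n GN hM.bot j (i + 1) hz2) hz1
    exact ⟨⟨u, hu⟩, hz2⟩

end Vanish


/-! ### Polynomial families and limits of subspaces -/

section Lim

variable {V W : Type} [AddCommGroup V] [Module K V] [AddCommGroup W] [Module K W]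

/-- Polynomial families `K → V`. -/
def PolyFam (V : Type) [AddCommGroup V] [Module K V] : Submodule K (K → V) :=
  Submodule.span K (Set.range fun (p : ℕ × V) (t : K) => t ^ p.1 • p.2)

theorem pow_mem_polyFam (k : ℕ) (v : V) : (fun t : K => t ^ k • v) ∈ PolyFam K V :=
  Submodule.subset_span ⟨(k, v), rfl⟩

theorem polyFam_comp {f : K → V} (hf : f ∈ PolyFam K V) (g : V →ₗ[K] W) :
    (fun t => g (f t)) ∈ PolyFam K W := by
  have : PolyFam K V ≤ (PolyFam K W).comap (g.compLeft K) := by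
    refine Submodule.span_le.2 ?_
    rintro _ ⟨⟨k, v⟩, rfl⟩
    have := pow_mem_polyFam K k (g v)
    simp only [SetLike.mem_coe, Submodule.mem_comap]
    convert this using 1
    ext t
    simp
  exact this hf

theorem polyFam_poly {f : K → K} (hf : f ∈ PolyFam K K) :
    ∃ P : Polynomial K, ∀ t, P.eval t = f t := by
  induction hf using Submodule.span_induction with
  | mem x h =>
    obtain ⟨⟨k, v⟩, rfl⟩ := h
    exact ⟨Polynomial.monomial k v, fun t => by simp [mul_comm]⟩
  | zero => exact ⟨0, by simp⟩
  | add x y _ _ hx hy =>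
    obtain ⟨P, hP⟩ := hx
    obtain ⟨Q, hQ⟩ := hy
    exact ⟨P + Q, fun t => by simp [hP, hQ]⟩
  | smul a x _ hx =>
    obtain ⟨P, hP⟩ := hx
    exact ⟨Polynomial.C a * P, fun t => by simp [hP]⟩

/-- Vectors which are limits at `0` of polynomial families with values in `Z l`. -/
def LimS (Z : Kˣ → Submodule K V) : Submodule K V where
  carrier := {v | ∃ f ∈ PolyFam K V, f 0 = v ∧ ∀ l : Kˣ, f l ∈ Z l}
  zero_mem' := ⟨0, zero_mem _, rfl, fun l => zero_mem _⟩
  add_mem' := by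
    rintro _ _ ⟨f, hf, rfl, hf'⟩ ⟨g, hg, rfl, hg'⟩
    exact ⟨f + g, add_mem hf hg, rfl, fun l => add_mem (hf' l) (hg' l)⟩
  smul_mem' := by
    rintro c _ ⟨f, hf, rfl, hf'⟩
    exact ⟨c • f, Submodule.smul_mem _ _ hf, rfl, fun l => Submodule.smul_mem _ _ (hf' l)⟩

theorem mem_LimS {Z : Kˣ → Submodule K V} {v : V} :
    v ∈ LimS K Z ↔ ∃ f ∈ PolyFam K V, f 0 = v ∧ ∀ l : Kˣ, f l ∈ Z l := Iff.rfl

theorem LimS_map {Z : Kˣ → Submodule K V} {Z' : Kˣ → Submodule K W} (g : V →ₗ[K] W)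
    (h : ∀ l, ∀ v ∈ Z l, g v ∈ Z' l) {v : V} (hv : v ∈ LimS K Z) : g v ∈ LimS K Z' := by
  obtain ⟨f, hf, rfl, hf'⟩ := hv
  exact ⟨_, polyFam_comp K hf g, rfl, fun l => h l _ (hf' l)⟩

theorem LimS_const {Z : Kˣ → Submodule K V} {v : V} (h : ∀ l, v ∈ Z l) : v ∈ LimS K Z :=
  ⟨fun _ => v, by simpa using pow_mem_polyFam K 0 v, rfl, h⟩

theorem LimS_finrank (Z0 : Submodule K V) (Z : Kˣ → Submodule K V)
    (h0 : Module.Finite K Z0) (h1 : ∀ l, Module.Finite K (Z l)) (h : Z0 ≤ LimS K Z) :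
    ∃ F : Polynomial K, F ≠ 0 ∧ ∀ l : Kˣ, F.eval (l : K) ≠ 0 →
      Module.finrank K Z0 ≤ Module.finrank K (Z l) := by
  classical
  set r := Module.finrank K Z0 with hr
  let b := Module.finBasis K Z0
  have hb : LinearIndependent K (fun k => (b k : V)) :=
    b.linearIndependent.map' Z0.subtype (Submodule.ker_subtype _)
  have hbf : ∀ k, ∃ f ∈ PolyFam K V, f 0 = (b k : V) ∧ ∀ l : Kˣ, f l ∈ Z l :=
    fun k => h (b k).2
  choose f hf hf0 hfl using hbf
  obtain ⟨φ, hφ⟩ := LinearMap.exists_leftInverse_of_injective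
    (Fintype.linearCombination K (fun k => (b k : V)))
    (by
      rw [LinearMap.ker_eq_bot]
      exact linearIndependent_iff_injective_fintypeLinearCombination.1 hb)
  have hP : ∀ k k', ∃ P : Polynomial K, ∀ t, P.eval t = φ (f k t) k' := fun k k' =>
    polyFam_poly K (polyFam_comp K (hf k) ((LinearMap.proj k').comp φ))
  choose P hP using hP
  have hdet : ∀ t, (Matrix.det (Matrix.of P)).eval t =
      Matrix.det (Matrix.of fun k k' => φ (f k t) k') := by
    intro t
    rw [← Polynomial.coe_evalRingHom, RingHom.map_det]
    congr 1
    ext k k'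
    simp [hP]
  have h00 : ∀ k, φ (b k : V) = Pi.single k 1 := by
    intro k
    have := LinearMap.congr_fun hφ (Pi.single k 1)
    simpa [Fintype.linearCombination_apply, Pi.single_apply, ite_smul] using this
  refine ⟨Matrix.det (Matrix.of P), ?_, ?_⟩
  · intro h
    have h2 := hdet 0
    rw [h] at h2
    have h3 : (Matrix.of fun k k' => φ (f k 0) k') = (1 : Matrix _ _ K) := by
      ext k k'
      simp [hf0, h00, Matrix.one_apply, Pi.single_apply, eq_comm]
    rw [h3] at h2
    simp at h2
  · intro l hl
    rw [hdet] at hl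
    have hli : LinearIndependent K (fun k => φ (f k l)) :=
      Matrix.linearIndependent_rows_of_isUnit
        ((Matrix.isUnit_iff_isUnit_det _).2 (isUnit_iff_ne_zero.2 hl))
    have hli2 : LinearIndependent K (fun k => f k l) := LinearIndependent.of_comp φ hli
    have hli3 : LinearIndependent K (fun k => (⟨f k l, hfl k l⟩ : Z l)) :=
      LinearIndependent.of_comp (Z l).subtype hli2
    have := h1 l
    simpa using hli3.fintype_card_le_finrank

end Lim


/-! ### The initial ideal as a limit -/

section Ideals

set_option linter.unusedSectionVars false

theorem coeff_diagCoord (w : Fin n → ℕ) (l : Kˣ) (f : PS K n) (m : Fin n →₀ ℕ) :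
    coeff m (diagCoord K n w l f) = (((l⁻¹ : Kˣ) : K)) ^ (wdeg n w m) * coeff m f := by
  induction f using MvPolynomial.induction_on' with
  | monomial u a =>
    have : diagCoord K n w l (monomial u a) =
        monomial u ((((l⁻¹ : Kˣ) : K)) ^ (wdeg n w u) * a) := by
      rw [diagCoord, aeval_monomial, Finsupp.prod_fintype _ _ (by simp)]
      simp only [smul_eq_C_mul, mul_pow, Finset.prod_mul_distrib, ← C_pow, ← map_prod]
      rw [monomial_eq (s := u), Finsupp.prod_fintype _ _ (by simp), wdeg, algebraMap_eq,
        ← mul_assoc, ← C_mul, ← Finset.prod_pow_eq_pow_sum, mul_comm a]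
      simp only [pow_mul]
    rw [this]
    simp only [coeff_monomial]
    split_ifs with h
    · rw [h]
    · simp
  | add p q hp hq => rw [map_add, coeff_add, hp, hq, coeff_add, mul_add]

theorem diagCoord_inv (w : Fin n → ℕ) (l : Kˣ) (f : PS K n) :
    diagCoord K n w l (diagCoord K n w l⁻¹ f) = f := by
  ext m
  rw [coeff_diagCoord, coeff_diagCoord, ← mul_assoc, ← mul_pow]
  simp

theorem diagCoord_surj (w : Fin n → ℕ) (l : Kˣ) : Function.Surjective (diagCoord K n w l) :=
  fun f => ⟨_, diagCoord_inv K n w l f⟩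

theorem mem_map_diagCoord (w : Fin n → ℕ) (l : Kˣ) (J : Ideal (PS K n)) (g : PS K n) :
    g ∈ Ideal.map (diagCoord K n w l) J ↔ ∃ f ∈ J, diagCoord K n w l f = g := by
  rw [Ideal.mem_map_iff_of_surjective _ (diagCoord_surj K n w l)]

theorem isHomog_map_diagCoord (w : Fin n → ℕ) (l : Kˣ) (J : Ideal (PS K n))
    (hJ : IsHomog K n J) : IsHomog K n (Ideal.map (diagCoord K n w l) J) := by
  intro g hg d
  rw [mem_map_diagCoord] at hg ⊢
  obtain ⟨f, hf, rfl⟩ := hg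
  refine ⟨_, hJ f hf d, ?_⟩
  ext m
  rw [coeff_diagCoord, coeff_homogeneousComponent, coeff_homogeneousComponent]
  split_ifs
  · rw [coeff_diagCoord]
  · simp

theorem coeff_initialForm (w : Fin n → ℕ) (f : PS K n) (m : Fin n →₀ ℕ) :
    coeff m (initialForm K n w f) =
      if wdeg n w m = f.support.sup (wdeg n w) then coeff m f else 0 := by
  classical
  rw [initialForm, coeff_sum]
  simp only [coeff_monomial]
  rw [Finset.sum_ite_eq']
  simp only [Finset.mem_filter, mem_support_iff]
  by_cases h : coeff m f = 0 <;> simp [h]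

theorem initialForm_eq_zero (w : Fin n → ℕ) (f : PS K n) (h : initialForm K n w f = 0) :
    f = 0 := by
  by_contra hf
  obtain ⟨m, hm, hm'⟩ := Finset.exists_mem_eq_sup f.support (support_nonempty.2 hf) (wdeg n w)
  have := coeff_initialForm K n w f m
  rw [if_pos hm'.symm, h, coeff_zero] at this
  exact (mem_support_iff.1 hm) this.symm

theorem isHomog_initialIdealW (w : Fin n → ℕ) (J : Ideal (PS K n)) (hJ : IsHomog K n J) :
    IsHomog K n (initialIdealW K n w J) := by
  classical
  have key : ∀ f ∈ J, ∀ d, homogeneousComponent d (initialForm K n w f) ∈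
      initialIdealW K n w J := by
    intro f hf d
    by_cases h : ((homogeneousComponent d f).support.sup (wdeg n w)) = f.support.sup (wdeg n w)
    · have : homogeneousComponent d (initialForm K n w f) =
          initialForm K n w (homogeneousComponent d f) := by
        ext m
        simp only [coeff_homogeneousComponent, coeff_initialForm, h]
        split_ifs <;> rfl
      rw [this]
      exact Ideal.subset_span ⟨_, hJ f hf d, rfl⟩
    · have : homogeneousComponent d (initialForm K n w f) = 0 := by
        ext m
        simp only [coeff_homogeneousComponent, coeff_initialForm, coeff_zero]
        split_ifs with h1 h2
        · by_contra hm
          apply h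
          apply le_antisymm
          · refine Finset.sup_mono ?_
            intro m' hm'
            rw [mem_support_iff, coeff_homogeneousComponent] at hm'
            rw [mem_support_iff]
            split_ifs at hm'
            · exact hm'
            · exact absurd rfl hm'
          · rw [← h2]
            refine Finset.le_sup (f := wdeg n w) ?_
            rw [mem_support_iff, coeff_homogeneousComponent, if_pos h1]
            exact hm
        · rfl
        · rfl
      rw [this]
      exact zero_mem _
  have hspan : initialIdealW K n w J = Ideal.span
      {g | ∃ f ∈ J, ∃ d, g = homogeneousComponent d (initialForm K n w f)} := by
    apply le_antisymm
    · refine Ideal.span_le.2 ?_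
      rintro _ ⟨f, hf, rfl⟩
      rw [← MvPolynomial.sum_homogeneousComponent (initialForm K n w f)]
      refine Ideal.sum_mem _ fun d _ => Ideal.subset_span ⟨f, hf, d, rfl⟩
    · refine Ideal.span_le.2 ?_
      rintro _ ⟨f, hf, d, rfl⟩
      exact key f hf d
  let _ : GradedAlgebra (homogeneousSubmodule (Fin n) K) := MvPolynomial.gradedAlgebra
  have hh : (initialIdealW K n w J).IsHomogeneous (homogeneousSubmodule (Fin n) K) := by
    rw [hspan]
    refine Ideal.homogeneous_span _ _ ?_
    rintro _ ⟨f, hf, d, rfl⟩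
    exact ⟨d, homogeneousComponent_isHomogeneous d _⟩
  intro f hf d
  have := hh d hf
  rwa [← MvPolynomial.decomposition.decompose'_apply]

theorem initialIdealW_le_LimS (w : Fin n → ℕ) (J : Ideal (PS K n)) (g : PS K n)
    (hg : g ∈ initialIdealW K n w J) :
    g ∈ LimS K (fun l : Kˣ => (Ideal.map (diagCoord K n w l) J).restrictScalars K) := by
  classical
  induction hg using Submodule.span_induction with
  | mem g h =>
    obtain ⟨f, hf, rfl⟩ := h
    set a := f.support.sup (wdeg n w) with ha
    refine ⟨fun t => ∑ m ∈ f.support, t ^ (a - wdeg n w m) • monomial m (coeff m f), ?_, ?_, ?_⟩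
    · have := Submodule.sum_mem (PolyFam K (PS K n)) (t := f.support)
        (f := fun m t => t ^ (a - wdeg n w m) • monomial m (coeff m f))
        (fun m _ => pow_mem_polyFam K (a - wdeg n w m) _)
      convert this using 1
      ext t : 1
      simp
    · rw [initialForm, Finset.sum_filter]
      refine Finset.sum_congr rfl fun m hm => ?_
      have hle : wdeg n w m ≤ a := Finset.le_sup (f := wdeg n w) hm
      rw [← ha]
      split_ifs with h
      · simp [h]
      · rw [zero_pow (by omega), zero_smul]
    · intro l
      have : (∑ m ∈ f.support, (l : K) ^ (a - wdeg n w m) • monomial m (coeff m f)) =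
          (l : K) ^ a • diagCoord K n w l f := by
        ext m
        rw [coeff_smul, coeff_diagCoord, coeff_sum]
        simp only [coeff_smul, coeff_monomial, smul_eq_mul, mul_ite, mul_zero]
        rw [Finset.sum_ite_eq']
        split_ifs with hm
        · have hle : wdeg n w m ≤ a := Finset.le_sup (f := wdeg n w) hm
          rw [← mul_assoc, pow_sub₀ _ l.ne_zero hle]
          simp
        · rw [notMem_support_iff.1 hm]
          simp
      simp only [Submodule.restrictScalars_mem]
      rw [this]
      exact Submodule.smul_of_tower_mem _ _ (Ideal.mem_map_of_mem _ hf)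
  | zero => exact zero_mem _
  | add x y _ _ hx hy => exact add_mem hx hy
  | smul a x _ hx =>
    exact LimS_map K (LinearMap.mulLeft K a)
      (fun l v hv => Ideal.mul_mem_left (Ideal.map (diagCoord K n w l) J) a hv) hx

theorem exists_theta (w : Fin n → ℕ) (J : Ideal (PS K n)) (hJ : IsHomog K n J) (l : Kˣ) :
    ∃ θ : (PS K n ⧸ initialIdealW K n w J) →ₗ[K] (PS K n ⧸ Ideal.map (diagCoord K n w l) J),
      Function.Injective θ ∧ ∀ d, ∀ x ∈ quotGrade K n (initialIdealW K n w J) d,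
        θ x ∈ quotGrade K n (Ideal.map (diagCoord K n w l) J) d := by
  classical
  set I := initialIdealW K n w J with hI
  let π := (Ideal.Quotient.mkₐ K I).toLinearMap
  have hπ : Function.Surjective π := Ideal.Quotient.mkₐ_surjective K I
  obtain ⟨κ, a, ha, hs, hli⟩ := exists_linearIndependent' K
    (fun m : Fin n →₀ ℕ => π (monomial m 1))
  have htop : Submodule.span K (Set.range fun m : Fin n →₀ ℕ => π (monomial m 1)) = ⊤ := by
    have : (Set.range fun m : Fin n →₀ ℕ => π (monomial m 1)) =
        π '' Set.range (fun m : Fin n →₀ ℕ => monomial m (1 : K)) := by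
      rw [← Set.range_comp]; rfl
    rw [this, ← Submodule.map_span]
    have h2 := (basisMonomials (Fin n) K).span_eq
    rw [coe_basisMonomials] at h2
    rw [h2, Submodule.map_top, LinearMap.range_eq_top.2 hπ]
  let b := Module.Basis.mk hli (by rw [hs, htop])
  have hb : ∀ k, b k = π (monomial (a k) 1) := fun k => by simp [b]
  let τ : (PS K n ⧸ I) →ₗ[K] PS K n := b.constr K (fun k => monomial (a k) (1 : K))
  have hτb : ∀ k, τ (π (monomial (a k) 1)) = monomial (a k) 1 := by
    intro k
    rw [← hb]
    exact b.constr_basis K _ k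
  have hsupp : ∀ x, ∀ m, coeff m (τ x) ≠ 0 → m ∈ Set.range a := by
    intro x m
    contrapose!
    intro hm
    have : (MvPolynomial.lcoeff K m) ∘ₗ τ = 0 := by
      refine b.ext fun k => ?_
      rw [hb, LinearMap.comp_apply, hτb]
      simp only [lcoeff_apply, coeff_monomial, LinearMap.zero_apply]
      rw [if_neg]
      rintro rfl
      exact hm ⟨k, rfl⟩
    exact LinearMap.congr_fun this x
  have hτ : ∀ f : PS K n, (∀ m, coeff m f ≠ 0 → m ∈ Set.range a) → τ (π f) = f := by
    intro f hf
    conv_lhs => rw [f.as_sum]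
    conv_rhs => rw [f.as_sum]
    rw [map_sum, map_sum]
    refine Finset.sum_congr rfl fun m hm => ?_
    obtain ⟨k, rfl⟩ := hf m (mem_support_iff.1 hm)
    have : monomial (a k) (coeff (a k) f) = coeff (a k) f • monomial (a k) (1 : K) := by
      rw [smul_monomial]; simp
    rw [this, map_smul, map_smul, hτb]
  have hmon : ∀ m : Fin n →₀ ℕ, monomial m (1 : K) ∈ polyGrade K n (m.degree : ℤ) := by
    intro m
    rw [polyGrade_nat]
    exact isHomogeneous_monomial _ rfl
  have hτg : ∀ d, ∀ x ∈ quotGrade K n I d, τ x ∈ polyGrade K n d := by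
    have hIg := isGr_quot K n I (isHomog_initialIdealW K n w J hJ)
    have hc : ∀ d x, (isGr_poly K n).proj d (τ x) = τ (hIg.proj d x) := by
      intro d x
      have : (isGr_poly K n).proj d ∘ₗ τ = τ ∘ₗ hIg.proj d := by
        refine b.ext fun k => ?_
        rw [hb, LinearMap.comp_apply, hτb, LinearMap.comp_apply,
          (isGr_poly K n).proj_of_mem d (hmon (a k)),
          hIg.proj_of_mem d (Submodule.mem_map_of_mem (hmon (a k)))]
        split_ifs
        · exact (hτb k).symm
        · simp
      exact LinearMap.congr_fun this x
    intro d x hx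
    have := hc d x
    rw [hIg.proj_self d hx] at this
    rw [← this]
    exact (isGr_poly K n).proj_mem d _
  refine ⟨(Ideal.Quotient.mkₐ K _).toLinearMap ∘ₗ τ, ?_, ?_⟩
  · rw [← LinearMap.ker_eq_bot, LinearMap.ker_eq_bot']
    intro x hx
    have hx' : τ x ∈ Ideal.map (diagCoord K n w l) J := Ideal.Quotient.eq_zero_iff_mem.1 hx
    rw [mem_map_diagCoord] at hx'
    obtain ⟨f, hf, hfx⟩ := hx'
    have h1 : ∀ m, coeff m f ≠ 0 → m ∈ Set.range a := by
      intro m hm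
      refine hsupp x m ?_
      rw [← hfx, coeff_diagCoord]
      exact mul_ne_zero (pow_ne_zero _ (Units.ne_zero _)) hm
    have h2 : ∀ m, coeff m (initialForm K n w f) ≠ 0 → m ∈ Set.range a := by
      intro m hm
      rw [coeff_initialForm] at hm
      refine h1 m ?_
      split_ifs at hm
      · exact hm
      · exact absurd rfl hm
    have h3 : π (initialForm K n w f) = 0 :=
      Ideal.Quotient.eq_zero_iff_mem.2 (Ideal.subset_span ⟨f, hf, rfl⟩)
    have h4 := hτ _ h2
    rw [h3, map_zero] at h4
    have h5 := initialForm_eq_zero K n w f h4.symm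
    rw [h5, map_zero] at hfx
    have h6 : π (τ x) = x := by
      have : π ∘ₗ τ = LinearMap.id := b.ext fun k => by
        rw [hb, LinearMap.comp_apply, hτb, LinearMap.id_apply]
      exact LinearMap.congr_fun this x
    rw [← h6, ← hfx, map_zero]
  · intro d x hx
    exact Submodule.mem_map_of_mem (hτg d x hx)

theorem quotGrade_smul (I : Ideal (PS K n)) (a b : ℤ) (s : PS K n) (hs : s ∈ polyGrade K n a)
    (x : PS K n ⧸ I) (hx : x ∈ quotGrade K n I b) : s • x ∈ quotGrade K n I (a + b) := by
  obtain ⟨f, hf, rfl⟩ := hx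
  exact ⟨s * f, mul_mem_polyGrade K n hs hf, rfl⟩

end Ideals


/-! ### Functoriality of the bar complex in the second argument -/

section Functor

set_option linter.unusedSectionVars false

variable {N}
variable {NN : Type} [AddCommGroup NN] [Module K NN] [Module (PS K n) NN]
  [IsScalarTower K (PS K n) NN]

/-- The map on `D_i` induced by a linear map from `N`. -/
def barDMap (φ : N →ₗ[K] NN) : (i : ℕ) → (barD K n N i →ₗ[K] barD K n NN i)
  | 0 => φ
  | (i + 1) => LinearMap.lTensor (PS K n) (barDMap φ i)

/-- The map on `M ⊗ D_i` induced by a linear map from `N`. -/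
def barQ (φ : N →ₗ[K] NN) (i : ℕ) : M ⊗[K] barD K n N i →ₗ[K] M ⊗[K] barD K n NN i :=
  LinearMap.lTensor M (barDMap K n φ i)

variable (φ : N →ₗ[K] NN)

theorem barDMap_mkT (i : ℕ) (s : PS K n) (t : barD K n N i) :
    barDMap K n φ (i + 1) (mkT K n N i s t) = mkT K n NN i s (barDMap K n φ i t) := rfl

theorem barQ_tmul (i : ℕ) (m : M) (t : barD K n N i) :
    barQ K n M φ i (m ⊗ₜ t) = m ⊗ₜ barDMap K n φ i t := rfl

theorem barDMap_surj (h : Function.Surjective φ) :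
    ∀ i, Function.Surjective (barDMap K n φ i)
  | 0 => h
  | (i + 1) => LinearMap.lTensor_surjective _ (barDMap_surj h i)

theorem barQ_surj (h : Function.Surjective φ) (i : ℕ) :
    Function.Surjective (barQ K n M φ i) :=
  LinearMap.lTensor_surjective _ (barDMap_surj K n φ h i)

theorem barDMap_inj (h : Function.Injective φ) :
    ∀ i, Function.Injective (barDMap K n φ i)
  | 0 => h
  | (i + 1) => Module.Flat.lTensor_preserves_injective_linearMap _ (barDMap_inj h i)

theorem barQ_inj (h : Function.Injective φ) (i : ℕ) :
    Function.Injective (barQ K n M φ i) :=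
  Module.Flat.lTensor_preserves_injective_linearMap _ (barDMap_inj K n φ h i)

theorem barDMap_mem {GN : ℤ → Submodule K N} {GN' : ℤ → Submodule K NN}
    (h : ∀ d, ∀ x ∈ GN d, φ x ∈ GN' d) (i : ℕ) : ∀ (d : ℤ) (x : barD K n N i),
    x ∈ barDGrade K n N GN i d → barDMap K n φ i x ∈ barDGrade K n NN GN' i d := by
  induction i with
  | zero => exact h
  | succ i ih =>
    intro d x hx
    refine barDGrade_map_mem K n (GN := GN) (barDMap K n φ (i + 1)) _ ?_ hx
    intro p q hpq s hs t ht
    rw [barDMap_mkT]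
    exact mkT_mem K n hpq hs (ih q t ht)

theorem barQ_mem {GN : ℤ → Submodule K N} {GN' : ℤ → Submodule K NN}
    (GM : ℤ → Submodule K M)
    (h : ∀ d, ∀ x ∈ GN d, φ x ∈ GN' d) (i : ℕ) (d : ℤ) (x : M ⊗[K] barD K n N i)
    (hx : x ∈ tensorGrade K GM (barDGrade K n N GN i) d) :
    barQ K n M φ i x ∈ tensorGrade K GM (barDGrade K n NN GN' i) d := by
  refine tensorGrade_map_mem (barQ K n M φ i) _ ?_ hx
  intro p q hpq m hm t ht
  rw [barQ_tmul]
  exact tmul_mem_tensorGrade hpq hm (barDMap_mem K n φ h i q t ht)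

theorem barDMap_barC (hφ : ∀ (s : PS K n) (x : N), φ (s • x) = s • φ x) (i : ℕ) :
    ∀ x : barD K n N (i + 1),
    barDMap K n φ i (barC K n N i x) = barC K n NN i (barDMap K n φ (i + 1) x) := by
  induction i with
  | zero =>
    refine barD_ind K n (P := fun x => barDMap K n φ 0 (barC K n N 0 x) =
      barC K n NN 0 (barDMap K n φ 1 x)) (by simp) ?_ ?_
    · intro s t
      exact hφ s t
    · intro x y hx hy
      simp only [map_add, hx, hy]
  | succ i ih =>
    refine barD_ind K n (P := fun x => barDMap K n φ (i + 1) (barC K n N (i + 1) x) =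
      barC K n NN (i + 1) (barDMap K n φ (i + 2) x)) (by simp) ?_ ?_
    · intro s t
      refine barD_ind K n (P := fun t => barDMap K n φ (i + 1) (barC K n N (i + 1)
        (mkT K n N (i + 1) s t)) = barC K n NN (i + 1) (barDMap K n φ (i + 2)
        (mkT K n N (i + 1) s t))) (by simp) ?_ ?_ t
      · intro s' t
        rw [barC_succ_mkT, map_sub, barDMap_mkT, barDMap_mkT, barDMap_mkT, barDMap_mkT,
          barC_succ_mkT, ih, barDMap_mkT]
      · intro x y hx hy
        simp only [map_add, hx, hy]
    · intro x y hx hy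
      simp only [map_add, hx, hy]

theorem barQ_barB (hφ : ∀ (s : PS K n) (x : N), φ (s • x) = s • φ x) (i : ℕ)
    (x : M ⊗[K] barD K n N (i + 1)) :
    barQ K n M φ i (barB K n N M i x) = barB K n NN M i (barQ K n M φ (i + 1) x) := by
  induction x with
  | zero => simp
  | add x y hx hy => simp only [map_add, hx, hy]
  | tmul m t =>
    refine barD_ind K n (P := fun t => barQ K n M φ i (barB K n N M i (m ⊗ₜ t)) =
      barB K n NN M i (barQ K n M φ (i + 1) (m ⊗ₜ t))) (by simp) ?_ ?_ t
    · intro s t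
      rw [barB_mkT, map_sub, barQ_tmul, barQ_tmul, barQ_tmul, barDMap_mkT, barB_mkT,
        barDMap_barC K n φ hφ, barDMap_mkT]
    · intro x y hx hy
      simp only [TensorProduct.tmul_add, map_add, hx, hy]

end Functor

section KerLim

theorem ker_lTensor_le_LimS {A B0 : Type} [AddCommGroup A] [Module K A] [AddCommGroup B0]
    [Module K B0] (f0 : A →ₗ[K] B0) (hf0 : Function.Surjective f0) {B : Kˣ → Type}
    [∀ l, AddCommGroup (B l)] [∀ l, Module K (B l)] (f : ∀ l, A →ₗ[K] B l)
    (h : LinearMap.ker f0 ≤ LimS K (fun l => LinearMap.ker (f l)))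
    (Q : Type) [AddCommGroup Q] [Module K Q] :
    LinearMap.ker (LinearMap.lTensor Q f0) ≤
      LimS K (fun l => LinearMap.ker (LinearMap.lTensor Q (f l))) := by
  have hex := lTensor_exact Q (LinearMap.exact_subtype_ker_map f0) hf0
  intro x hx
  obtain ⟨y, rfl⟩ := (hex x).1 hx
  clear hx
  induction y with
  | zero => rw [map_zero]; exact zero_mem _
  | add x y hx hy => rw [map_add]; exact add_mem hx hy
  | tmul q a =>
    refine LimS_map K (TensorProduct.mk K Q A q) ?_ (h a.2)
    intro l v hv
    rw [LinearMap.mem_ker] at hv ⊢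
    simp [hv]

theorem finrank_map_add {A B : Type} [AddCommGroup A] [Module K A] [AddCommGroup B]
    [Module K B] (f : A →ₗ[K] B) (P : Submodule K A) [Module.Finite K P] :
    Module.finrank K (P.map f) + Module.finrank K ↥(LinearMap.ker f ⊓ P) =
      Module.finrank K P := by
  have h := LinearMap.finrank_range_add_finrank_ker (f.domRestrict P)
  have h1 : LinearMap.range (f.domRestrict P) = P.map f := by
    rw [LinearMap.domRestrict, LinearMap.range_comp, Submodule.range_subtype]
  have h2 : (LinearMap.ker (f.domRestrict P)).map P.subtype = LinearMap.ker f ⊓ P := by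
    ext x
    simp [and_comm]
  rw [h1] at h
  rw [← h2, ← h]
  congr 1
  exact Submodule.finrank_map_subtype_eq _ _

end KerLim


/-! ### The dimension count -/

section Count

set_option linter.unusedSectionVars false

variable {M}

/-- The projection `S → S/I`, as a `K`-linear map. -/
def quoMap (I : Ideal (PS K n)) : PS K n →ₗ[K] PS K n ⧸ I :=
  (Ideal.Quotient.mkₐ K I).toLinearMap

theorem quoMap_surj (I : Ideal (PS K n)) : Function.Surjective (quoMap K n I) :=
  Ideal.Quotient.mkₐ_surjective K I

theorem quoMap_smul (I : Ideal (PS K n)) (s x : PS K n) :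
    quoMap K n I (s • x) = s • quoMap K n I x := rfl

theorem mem_ker_quoMap (I : Ideal (PS K n)) (x : PS K n) :
    x ∈ LinearMap.ker (quoMap K n I) ↔ x ∈ I :=
  Ideal.Quotient.eq_zero_iff_mem

theorem quoMap_mem (I : Ideal (PS K n)) (d : ℤ) (x : PS K n) (hx : x ∈ polyGrade K n d) :
    quoMap K n I x ∈ quotGrade K n I d := Submodule.mem_map_of_mem hx

/-- The strand of `M ⊗ D_i(S)`. -/
def strX (GM : ℤ → Submodule K M) (i : ℕ) (j : ℤ) : Submodule K (M ⊗[K] barD K n (PS K n) i) :=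
  tensorGrade K GM (barDGrade K n (PS K n) (polyGrade K n) i) j

/-- The strand of `M ⊗ D_i(S/I)`. -/
def strC (GM : ℤ → Submodule K M) (I : Ideal (PS K n)) (i : ℕ) (j : ℤ) :
    Submodule K (M ⊗[K] barD K n (PS K n ⧸ I) i) :=
  tensorGrade K GM (barDGrade K n (PS K n ⧸ I) (quotGrade K n I) i) j

/-- The elements of `M ⊗ D_i(S)` mapping to boundaries. -/
def bdZ (M : Type) [AddCommGroup M] [Module K M] [Module (PS K n) M]
    [IsScalarTower K (PS K n) M] (I : Ideal (PS K n)) (i : ℕ) :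
    Submodule K (M ⊗[K] barD K n (PS K n) i) :=
  (LinearMap.range (barB K n (PS K n ⧸ I) M i)).comap (barQ K n M (quoMap K n I) i)

theorem barB_mem_bdZ (I : Ideal (PS K n)) (i : ℕ) (y : M ⊗[K] barD K n (PS K n) (i + 1)) :
    barB K n (PS K n) M i y ∈ bdZ K n M I i :=
  ⟨_, (barQ_barB K n M (quoMap K n I) (quoMap_smul K n I) i y).symm⟩

variable {GM : ℤ → Submodule K M} {a : ℤ}

theorem strX_fin (hb : IsBdd GM a) (i : ℕ) (j : ℤ) : Module.Finite K (strX K n GM i j) :=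
  Module.Finite.iff_fg.2 ((hb.tensor (barD_isBdd K n _ (isBdd_poly K n) i)).fin j)

theorem strC_fin (hb : IsBdd GM a) (I : Ideal (PS K n)) (i : ℕ) (j : ℤ) :
    Module.Finite K (strC K n GM I i j) :=
  Module.Finite.iff_fg.2 ((hb.tensor (barD_isBdd K n _ (isBdd_quot K n I) i)).fin j)

/-- The grading of `M ⊗ D_i(S)`. -/
theorem strX_gr (hg : IsGr K GM) (i : ℕ) : IsGr K (fun j => strX K n GM i j) :=
  hg.tensor (barD_isGr K n _ (isGr_poly K n) i)

/-- The grading of `M ⊗ D_i(S/I)`. -/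
theorem strC_gr (hg : IsGr K GM) (I : Ideal (PS K n)) (hI : IsHomog K n I) (i : ℕ) :
    IsGr K (fun j => strC K n GM I i j) :=
  hg.tensor (barD_isGr K n _ (isGr_quot K n I hI) i)

theorem barQ_strX (I : Ideal (PS K n)) (i : ℕ) (j : ℤ) (x) (hx : x ∈ strX K n GM i j) :
    barQ K n M (quoMap K n I) i x ∈ strC K n GM I i j :=
  barQ_mem K n M (quoMap K n I) GM (quoMap_mem K n I) i j x hx

theorem barB_strX (hM : ∀ a b, ∀ s ∈ polyGrade K n a, ∀ x ∈ GM b, s • x ∈ GM (a + b))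
    (i : ℕ) (j : ℤ) (x) (hx : x ∈ strX K n GM (i + 1) j) :
    barB K n (PS K n) M i x ∈ strX K n GM i j :=
  barB_mem K n M (polyGrade K n) (fun _ _ _ hs _ hx => mul_mem_polyGrade K n hs hx) hM i j x hx

theorem barB_strC (hM : ∀ a b, ∀ s ∈ polyGrade K n a, ∀ x ∈ GM b, s • x ∈ GM (a + b))
    (I : Ideal (PS K n)) (i : ℕ) (j : ℤ) (x) (hx : x ∈ strC K n GM I (i + 1) j) :
    barB K n (PS K n ⧸ I) M i x ∈ strC K n GM I i j :=
  barB_mem K n M (quotGrade K n I) (quotGrade_smul K n I) hM i j x hx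

theorem map_strX (hg : IsGr K GM) (I : Ideal (PS K n)) (hI : IsHomog K n I) (i : ℕ) (j : ℤ) :
    (strX K n GM i j).map (barQ K n M (quoMap K n I) i) = strC K n GM I i j := by
  apply le_antisymm
  · rw [Submodule.map_le_iff_le_comap]
    intro x hx
    exact barQ_strX K n I i j x hx
  · intro y hy
    obtain ⟨x, rfl⟩ := barQ_surj K n M (quoMap K n I) (quoMap_surj K n I) i y
    refine ⟨(strX_gr K n hg i).proj j x, (strX_gr K n hg i).proj_mem j x, ?_⟩
    rw [← IsGr.proj_comm (strX_gr K n hg i) (strC_gr K n hg I hI i) _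
      (fun d a ha => barQ_strX K n I i d a ha)]
    exact (strC_gr K n hg I hI i).proj_self j hy

theorem map_strC (hg : IsGr K GM)
    (hM : ∀ a b, ∀ s ∈ polyGrade K n a, ∀ x ∈ GM b, s • x ∈ GM (a + b))
    (I : Ideal (PS K n)) (hI : IsHomog K n I) (i : ℕ) (j : ℤ) :
    (strC K n GM I (i + 1) j).map (barB K n (PS K n ⧸ I) M i) =
      LinearMap.range (barB K n (PS K n ⧸ I) M i) ⊓ strC K n GM I i j := by
  apply le_antisymm
  · rintro _ ⟨x, hx, rfl⟩
    exact ⟨⟨x, rfl⟩, barB_strC K n hM I i j x hx⟩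
  · rintro _ ⟨⟨x, rfl⟩, hy⟩
    refine ⟨(strC_gr K n hg I hI (i + 1)).proj j x, (strC_gr K n hg I hI (i + 1)).proj_mem j x, ?_⟩
    rw [← IsGr.proj_comm (strC_gr K n hg I hI (i + 1)) (strC_gr K n hg I hI i) _
      (fun d a ha => barB_strC K n hM I i d a ha)]
    exact (strC_gr K n hg I hI i).proj_self j hy

theorem map_bdZ (hg : IsGr K GM) (I : Ideal (PS K n)) (hI : IsHomog K n I) (i : ℕ) (j : ℤ) :
    (bdZ K n M I i ⊓ strX K n GM i j).map (barQ K n M (quoMap K n I) i) =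
      LinearMap.range (barB K n (PS K n ⧸ I) M i) ⊓ strC K n GM I i j := by
  apply le_antisymm
  · rintro _ ⟨x, ⟨hx1, hx2⟩, rfl⟩
    exact ⟨hx1, barQ_strX K n I i j x hx2⟩
  · rintro y ⟨hy1, hy2⟩
    rw [← map_strX K n hg I hI] at hy2
    obtain ⟨x, hx, rfl⟩ := hy2
    exact ⟨x, ⟨hy1, hx⟩, rfl⟩

theorem count_Z (hg : IsGr K GM) (hb : IsBdd GM a) (I : Ideal (PS K n)) (hI : IsHomog K n I)
    (i : ℕ) (j : ℤ) :
    Module.finrank K (strC K n GM I i j) +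
        Module.finrank K ↥(bdZ K n M I i ⊓ strX K n GM i j) =
      Module.finrank K (strX K n GM i j) +
        Module.finrank K ↥(LinearMap.range (barB K n (PS K n ⧸ I) M i) ⊓ strC K n GM I i j) := by
  have := strX_fin K n hb i j
  have : Module.Finite K ↥(bdZ K n M I i ⊓ strX K n GM i j) :=
    Submodule.finiteDimensional_inf_right _ _
  have h1 := finrank_map_add K (barQ K n M (quoMap K n I) i) (strX K n GM i j)
  have h2 := finrank_map_add K (barQ K n M (quoMap K n I) i)
    (bdZ K n M I i ⊓ strX K n GM i j)
  rw [map_strX K n hg I hI] at h1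
  rw [map_bdZ K n hg I hI] at h2
  have h3 : LinearMap.ker (barQ K n M (quoMap K n I) i) ⊓ (bdZ K n M I i ⊓ strX K n GM i j) =
      LinearMap.ker (barQ K n M (quoMap K n I) i) ⊓ strX K n GM i j := by
    have hle : LinearMap.ker (barQ K n M (quoMap K n I) i) ≤ bdZ K n M I i := by
      intro x hx
      rw [LinearMap.mem_ker] at hx
      exact ⟨0, by rw [hx, map_zero]⟩
    rw [← inf_assoc, inf_eq_left.2 hle]
  rw [h3] at h2
  omega

theorem count_K (hg : IsGr K GM) (hb : IsBdd GM a)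
    (hM : ∀ a b, ∀ s ∈ polyGrade K n a, ∀ x ∈ GM b, s • x ∈ GM (a + b))
    (I : Ideal (PS K n)) (hI : IsHomog K n I) (i : ℕ) (j : ℤ) :
    Module.finrank K ↥(LinearMap.range (barB K n (PS K n ⧸ I) M i) ⊓ strC K n GM I i j) +
        Module.finrank K ↥(LinearMap.ker (barB K n (PS K n ⧸ I) M i) ⊓
          strC K n GM I (i + 1) j) =
      Module.finrank K (strC K n GM I (i + 1) j) := by
  have := strC_fin K n hb I (i + 1) j
  rw [← finrank_map_add K (barB K n (PS K n ⧸ I) M i) (strC K n GM I (i + 1) j),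
    map_strC K n hg hM I hI]

theorem ker_barDMap_le_LimS (w : Fin n → ℕ) (J : Ideal (PS K n)) (i : ℕ) :
    LinearMap.ker (barDMap K n (quoMap K n (initialIdealW K n w J)) i) ≤
      LimS K (fun l => LinearMap.ker
        (barDMap K n (quoMap K n (Ideal.map (diagCoord K n w l) J)) i)) := by
  induction i with
  | zero =>
    intro x hx
    have hx' : x ∈ initialIdealW K n w J := (mem_ker_quoMap K n _ x).1 hx
    refine LimS_map K (LinearMap.id : PS K n →ₗ[K] PS K n) ?_ (initialIdealW_le_LimS K n w J x hx')
    intro l v hv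
    exact (mem_ker_quoMap K n _ v).2 hv
  | succ i ih =>
    exact ker_lTensor_le_LimS K _ (barDMap_surj K n _ (quoMap_surj K n _) i)
      (fun l => barDMap K n (quoMap K n (Ideal.map (diagCoord K n w l) J)) i) ih (PS K n)

theorem ker_barQ_le_LimS (w : Fin n → ℕ) (J : Ideal (PS K n)) (i : ℕ) :
    LinearMap.ker (barQ K n M (quoMap K n (initialIdealW K n w J)) i) ≤
      LimS K (fun l => LinearMap.ker
        (barQ K n M (quoMap K n (Ideal.map (diagCoord K n w l) J)) i)) :=
  ker_lTensor_le_LimS K _ (barDMap_surj K n _ (quoMap_surj K n _) i)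
      (fun l => barDMap K n (quoMap K n (Ideal.map (diagCoord K n w l) J)) i)
      (ker_barDMap_le_LimS K n w J i) M

theorem bdZ_le_LimS (w : Fin n → ℕ) (J : Ideal (PS K n)) (i : ℕ) :
    bdZ K n M (initialIdealW K n w J) i ≤
      LimS K (fun l => bdZ K n M (Ideal.map (diagCoord K n w l) J) i) := by
  rintro z ⟨y, hy⟩
  obtain ⟨y, rfl⟩ := barQ_surj K n M _ (quoMap_surj K n (initialIdealW K n w J)) (i + 1) y
  rw [← barQ_barB K n M _ (quoMap_smul K n _)] at hy
  have h1 : z - barB K n (PS K n) M i y ∈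
      LinearMap.ker (barQ K n M (quoMap K n (initialIdealW K n w J)) i) := by
    rw [LinearMap.mem_ker, map_sub, hy, sub_self]
  have h2 := LimS_map K (Z' := fun l => bdZ K n M (Ideal.map (diagCoord K n w l) J) i)
    LinearMap.id (by
      intro l v hv
      rw [LinearMap.mem_ker] at hv
      exact ⟨0, by rw [LinearMap.id_apply, hv, map_zero]⟩) (ker_barQ_le_LimS K n w J i h1)
  have h3 : barB K n (PS K n) M i y ∈
      LimS K (fun l => bdZ K n M (Ideal.map (diagCoord K n w l) J) i) :=
    LimS_const K fun l => barB_mem_bdZ K n _ i y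
  have := add_mem h2 h3
  rwa [LinearMap.id_apply, sub_add_cancel] at this

theorem proj_bdZ (hg : IsGr K GM)
    (hM : ∀ a b, ∀ s ∈ polyGrade K n a, ∀ x ∈ GM b, s • x ∈ GM (a + b))
    (I : Ideal (PS K n)) (hI : IsHomog K n I) (i : ℕ) (j : ℤ) (v) (hv : v ∈ bdZ K n M I i) :
    (strX_gr K n hg i).proj j v ∈ bdZ K n M I i ⊓ strX K n GM i j := by
  refine ⟨?_, (strX_gr K n hg i).proj_mem j v⟩
  obtain ⟨y, hy⟩ := hv
  refine ⟨(strC_gr K n hg I hI (i + 1)).proj j y, ?_⟩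
  rw [← IsGr.proj_comm (strX_gr K n hg i) (strC_gr K n hg I hI i) _
      (fun d a ha => barQ_strX K n I i d a ha), ← hy,
    IsGr.proj_comm (strC_gr K n hg I hI (i + 1)) (strC_gr K n hg I hI i) _
      (fun d a ha => barB_strC K n hM I i d a ha)]

theorem exists_F (hg : IsGr K GM) (hb : IsBdd GM a)
    (hM : ∀ a b, ∀ s ∈ polyGrade K n a, ∀ x ∈ GM b, s • x ∈ GM (a + b))
    (w : Fin n → ℕ) (J : Ideal (PS K n)) (hJ : IsHomog K n J) (i : ℕ) (j : ℤ) :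
    ∃ F : Polynomial K, F ≠ 0 ∧ ∀ l : Kˣ, F.eval (l : K) ≠ 0 →
      Module.finrank K ↥(bdZ K n M (initialIdealW K n w J) i ⊓ strX K n GM i j) ≤
      Module.finrank K ↥(bdZ K n M (Ideal.map (diagCoord K n w l) J) i ⊓ strX K n GM i j) := by
  have := strX_fin K n hb i j
  refine LimS_finrank K _ (fun l => bdZ K n M (Ideal.map (diagCoord K n w l) J) i ⊓ strX K n GM i j)
    (Submodule.finiteDimensional_inf_right _ _)
    (fun l => Submodule.finiteDimensional_inf_right _ _) ?_
  rintro z ⟨hz1, hz2⟩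
  have h := LimS_map K (Z' := fun l => bdZ K n M (Ideal.map (diagCoord K n w l) J) i ⊓
      strX K n GM i j) ((strX_gr K n hg i).proj j)
    (fun l v hv => proj_bdZ K n hg hM _ (isHomog_map_diagCoord K n w l J hJ) i j v hv)
    (bdZ_le_LimS K n w J i hz1)
  rwa [(strX_gr K n hg i).proj_self j hz2] at h

theorem strC_le (hb : IsBdd GM a) (w : Fin n → ℕ) (J : Ideal (PS K n)) (hJ : IsHomog K n J)
    (l : Kˣ) (i : ℕ) (j : ℤ) :
    Module.finrank K (strC K n GM (initialIdealW K n w J) i j) ≤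
      Module.finrank K (strC K n GM (Ideal.map (diagCoord K n w l) J) i j) := by
  obtain ⟨θ, hθ, hθg⟩ := exists_theta K n w J hJ l
  have := strC_fin K n hb (Ideal.map (diagCoord K n w l) J) i j
  have hinj := barQ_inj K n M θ hθ i
  have hm : ∀ x ∈ strC K n GM (initialIdealW K n w J) i j,
      barQ K n M θ i x ∈ strC K n GM (Ideal.map (diagCoord K n w l) J) i j :=
    fun x hx => barQ_mem K n M θ GM hθg i j x hx
  refine LinearMap.finrank_le_finrank_of_injective (f := (barQ K n M θ i).restrict hm) ?_
  intro x y hxy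
  apply Subtype.ext
  apply hinj
  exact congrArg Subtype.val hxy

theorem main_aux (hg : IsGr K GM) (hb : IsBdd GM a)
    (hM : ∀ a b, ∀ s ∈ polyGrade K n a, ∀ x ∈ GM b, s • x ∈ GM (a + b))
    (w : Fin n → ℕ) (J : Ideal (PS K n)) (hJ : IsHomog K n J) (j : ℤ) :
    generallyScalar K (fun l => ∀ i : ℕ,
      torStrandDim K n (PS K n ⧸ Ideal.map (diagCoord K n w l) J) M
          GM (quotGrade K n (Ideal.map (diagCoord K n w l) J)) i j ≤
        torStrandDim K n (PS K n ⧸ initialIdealW K n w J) M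
          GM (quotGrade K n (initialIdealW K n w J)) i j) := by
  choose F hF0 hF using fun i => exists_F K n hg hb hM w J hJ i j
  refine ⟨∏ i ∈ Finset.range ((j - a).toNat + 1), F i,
    Finset.prod_ne_zero_iff.2 fun i _ => hF0 i, ?_⟩
  intro l hl i
  rw [Polynomial.eval_prod, Finset.prod_ne_zero_iff] at hl
  have hI0 := isHomog_initialIdealW K n w J hJ
  have hIl := isHomog_map_diagCoord K n w l J hJ
  by_cases hi : i ≤ (j - a).toNat
  · cases i with
    | zero =>
      have hz := hF 0 l (hl 0 (by simp))
      have e1 := count_Z K n hg hb _ hI0 0 j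
      have e2 := count_Z K n hg hb _ hIl 0 j
      rw [torStrandDim_zero, torStrandDim_zero]
      change Module.finrank K (strC K n GM (Ideal.map (diagCoord K n w l) J) 0 j) -
        Module.finrank K ↥(LinearMap.range _ ⊓ strC K n GM (Ideal.map (diagCoord K n w l) J) 0 j)
        ≤ Module.finrank K (strC K n GM (initialIdealW K n w J) 0 j) -
        Module.finrank K ↥(LinearMap.range _ ⊓ strC K n GM (initialIdealW K n w J) 0 j)
      omega
    | succ i =>
      have hz := hF i l (hl i (by simp; omega))
      have hz' := hF (i + 1) l (hl (i + 1) (by simp; omega))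
      have e1 := count_Z K n hg hb _ hI0 i j
      have e2 := count_Z K n hg hb _ hIl i j
      have e1' := count_Z K n hg hb _ hI0 (i + 1) j
      have e2' := count_Z K n hg hb _ hIl (i + 1) j
      have k1 := count_K K n hg hb hM _ hI0 i j
      have k2 := count_K K n hg hb hM _ hIl i j
      have hc := strC_le K n hb w J hJ l i j
      rw [torStrandDim_succ, torStrandDim_succ]
      change Module.finrank K ↥(LinearMap.ker _ ⊓
          strC K n GM (Ideal.map (diagCoord K n w l) J) (i + 1) j) -
        Module.finrank K ↥(LinearMap.range _ ⊓
          strC K n GM (Ideal.map (diagCoord K n w l) J) (i + 1) j)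
        ≤ Module.finrank K ↥(LinearMap.ker _ ⊓ strC K n GM (initialIdealW K n w J) (i + 1) j) -
        Module.finrank K ↥(LinearMap.range _ ⊓ strC K n GM (initialIdealW K n w J) (i + 1) j)
      omega
  · have := torStrandDim_eq_zero K n (quotGrade K n (Ideal.map (diagCoord K n w l) J))
      (isBdd_quot K n _) (quotGrade_smul K n _) hg hb hM i j (by omega)
    omega

end Count

/-- **Lemma 2.4** (Caviglia–Murai): fix `j ∈ ℤ`, a weight `w ∈ ℤ_{≥0}^n`, a finitely
generated graded `S`-module `M` and a homogeneous ideal `J ⊆ S`.  For a general `λ ∈ K`,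
`dim_K Tor_i(M, S/in_w(J))_j ≥ dim_K Tor_i(M, S/D_{λ,w}(J))_j` for all `i`. -/
theorem tor_dim_initial_weight_ge [Infinite K] (j : ℤ) (w : Fin n → ℕ)
    (Mod : Type) [AddCommGroup Mod] [Module K Mod] [Module (PS K n) Mod]
    [IsScalarTower K (PS K n) Mod]
    (GMod : ℤ → Submodule K Mod) [DirectSum.Decomposition GMod]
    (hGMod : ∀ (a : ℕ) (b : ℤ) (s : PS K n) (x : Mod),
      s ∈ homogeneousSubmodule (Fin n) K a → x ∈ GMod b → s • x ∈ GMod ((a : ℤ) + b))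
    (hModfg : Module.Finite (PS K n) Mod)
    (J : Ideal (PS K n)) (hJ : IsHomog K n J) :
    generallyScalar K (fun l => ∀ i : ℕ,
      torStrandDim K n (PS K n ⧸ Ideal.map (diagCoord K n w l) J) Mod
          GMod (quotGrade K n (Ideal.map (diagCoord K n w l) J)) i j ≤
        torStrandDim K n (PS K n ⧸ initialIdealW K n w J) Mod
          GMod (quotGrade K n (initialIdealW K n w J)) i j) := by
  have hg : IsGr K GMod := isGr_of_decomposition GMod
  obtain ⟨a, hb⟩ := isBdd_module K n Mod hg hGMod hModfg
  refine main_aux K n hg hb ?_ w J hJ j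
  intro a b s hs x hx
  rcases mem_polyGrade K n hs with rfl | ⟨d, rfl, hd⟩
  · rw [zero_smul]
    exact zero_mem _
  · exact hGMod d b s x hd hx

end
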